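/- arXiv:1009.4966 — 6 statements merged into one kernel-verified Lean document; each statement's English description precedes it below -/
import Mathlib

section
/- Let K be a finite field with q elements and let G ∈ K[t_1,…,t_s] be a nonzero polynomial of total degree d. Then the number N of zeros of G in K^s satisfies N ≤ d·q^{s−1}. Moreover, if G is homogeneous, then the number of zeros of G in K^s ∖ {0} is at most d·(q^{s−1} − 1). -/
open MvPolynomial

/-!
The bound on all zeros is the Schwartz–Zippel lemma for the full grid `K^s`.

For homogeneous `G`, suppose first that `G(a) ≠ 0` for some `a`, and partition `K^s` into the
`q^(s-1)` lines of direction `a`. On the line through `x`, the polynomial `G(x + ta)` in `t` has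
degree at most `d` and its coefficient of `t^d` is `G(a) ≠ 0`, so the line contains at most `d`
zeros. The line through the origin contains no nonzero zero because `G(ta) = t^d G(a)`.
If instead `G` vanishes on all of `K^s`, then `s ≥ 2` and `d ≥ q + 1`, so the bound is at least the
number `q^s - 1` of nonzero points.
-/

theorem coeff_prod_sum_of_natDegree_le {ι R : Type*} [CommSemiring R] (s : Finset ι)
    {p : ι → Polynomial R} {n : ι → ℕ} (hp : ∀ i ∈ s, (p i).natDegree ≤ n i) :
    (∏ i ∈ s, p i).coeff (∑ i ∈ s, n i) = ∏ i ∈ s, (p i).coeff (n i) := by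
  classical
  induction s using Finset.induction_on with
  | empty => simp
  | insert i s hi ih =>
    obtain ⟨hpi, hps⟩ := Finset.forall_mem_insert .. |>.mp hp
    rw [Finset.prod_insert hi, Finset.sum_insert hi, Finset.prod_insert hi, ← ih hps]
    exact Polynomial.coeff_mul_add_eq_of_natDegree_le hpi
      ((Polynomial.natDegree_prod_le s p).trans (Finset.sum_le_sum hps))

theorem pow_sub_one_le_mul_pow_pred_sub_one {q s d : ℕ} (hs : 2 ≤ s) (hqd : q < d) :
    q ^ s - 1 ≤ d * (q ^ (s - 1) - 1) := by
  obtain ⟨n, rfl⟩ := Nat.exists_eq_add_of_le' hs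
  have hq : q ≤ q ^ (n + 1) := Nat.le_self_pow n.succ_ne_zero q
  calc q ^ (n + 2) - 1 ≤ (q + 1) * (q ^ (n + 1) - 1) := by
        rw [Nat.mul_sub, pow_succ' q (n + 1), add_mul]
        lia
    _ ≤ d * (q ^ (n + 1) - 1) := Nat.mul_le_mul_right _ hqd

theorem card_quotient_span_singleton {K V : Type*} [Field K] [AddCommGroup V] [Module K V]
    [Module.Finite K V] {v : V} (hv : v ≠ 0) :
    Nat.card (V ⧸ Submodule.span K {v}) = Nat.card K ^ (Module.finrank K V - 1) := by
  rw [Module.natCard_eq_pow_finrank (K := K), Submodule.finrank_quotient,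
    finrank_span_singleton hv]

theorem ncard_zeros_le {R : Type*} [CommRing R] [IsDomain R] [Finite R] {n : ℕ}
    {p : MvPolynomial (Fin n) R} (hp : p ≠ 0) :
    {x : Fin n → R | eval x p = 0}.ncard ≤ p.totalDegree * Nat.card R ^ (n - 1) := by
  classical
  have := Fintype.ofFinite R
  have schwartz_zippel := schwartz_zippel_totalDegree hp (Finset.univ : Finset R)
  rw [Fintype.piFinset_univ, Finset.card_univ,
    div_le_div_iff₀ (by positivity) (by positivity)] at schwartz_zippel
  rw [Set.ncard_eq_toFinset_card', Nat.card_eq_fintype_card, Set.toFinset_ofPred]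
  cases n with
  | zero =>
    rw [p.eq_C_of_isEmpty] at hp ⊢
    simpa using hp
  | succ n =>
    rw [pow_succ, ← mul_assoc] at schwartz_zippel
    exact_mod_cast le_of_mul_le_mul_right schwartz_zippel (by positivity)

section CommSemiring

variable {σ R : Type*} [CommSemiring R] {G : MvPolynomial σ R} {d : ℕ}

/-- The restriction of `G` to the line through `x` with direction `a`, as the univariate
polynomial `G(x + ta)` in the parameter `t`; the direction `a = 0` is allowed. -/
noncomputable def restrictLine (G : MvPolynomial σ R) (x a : σ → R) : Polynomial R :=
  aeval (fun i => Polynomial.C (a i) * Polynomial.X + Polynomial.C (x i)) G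

theorem eval_restrictLine (x a : σ → R) (t : R) :
    (restrictLine G x a).eval t = eval (x + t • a) G := by
  rw [restrictLine, ← Polynomial.coe_aeval_eq_eval, ← AlgHom.comp_apply, comp_aeval, aeval_eq_eval]
  congr 2
  ext i
  simp [add_comm (x i), mul_comm t]

theorem natDegree_restrictLine_le (x a : σ → R) :
    (restrictLine G x a).natDegree ≤ G.totalDegree := by
  simpa [restrictLine] using aeval_natDegree_le G le_rfl _ fun i => Polynomial.natDegree_linear_le

theorem coeff_restrictLine_of_isHomogeneous (hG : G.IsHomogeneous d) (x a : σ → R) :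
    (restrictLine G x a).coeff d = eval a G := by
  rw [restrictLine, aeval_def, eval₂_eq, eval_eq, Polynomial.finsetSum_coeff]
  refine Finset.sum_congr rfl fun m hm => ?_
  have linear_le (i : σ) :
      (Polynomial.C (a i) * Polynomial.X + Polynomial.C (x i)).natDegree ≤ 1 :=
    Polynomial.natDegree_linear_le
  rw [Polynomial.algebraMap_eq, Polynomial.coeff_C_mul, hG.degree_eq_sum_deg_support hm,
    coeff_prod_sum_of_natDegree_le]
  · congr! 2 with i
    simpa using Polynomial.coeff_pow_of_natDegree_le (m := m i) (linear_le i)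
  · intro i _
    simpa using Polynomial.natDegree_pow_le_of_le (m i) (linear_le i)

theorem eval_smul_of_isHomogeneous (hG : G.IsHomogeneous d) (t : R) (x : σ → R) :
    eval (t • x) G = t ^ d * eval x G := by
  rw [eval_eq, eval_eq, Finset.mul_sum]
  refine Finset.sum_congr rfl fun m hm => ?_
  simp_rw [Pi.smul_apply, smul_eq_mul, mul_pow, Finset.prod_mul_distrib,
    Finset.prod_pow_eq_pow_sum, ← hG.degree_eq_sum_deg_support hm]
  exact mul_left_comm ..

theorem eval_one_ne_zero_of_subsingleton [Subsingleton σ] (hG : G.IsHomogeneous d)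
    (hG₀ : G ≠ 0) : eval 1 G ≠ 0 := by
  obtain ⟨m, hm⟩ := exists_coeff_ne_zero hG₀
  have eq_of_mem_support : ∀ m' ∈ G.support, m' = m := by
    intro m' hm'
    ext i
    have := Fintype.ofSubsingleton i
    have degree_eq := (hG.degree_eq_sum_deg_support hm').symm.trans
      (hG.degree_eq_sum_deg_support (mem_support_iff.mpr hm))
    simpa only [← Finsupp.degree_apply, Finsupp.degree_eq_sum,
      Fintype.sum_subsingleton _ i] using degree_eq
  rw [eval_eq, Finset.sum_eq_single m]
  · simpa using hm
  · exact fun m' hm' hne => absurd (eq_of_mem_support m' hm') hne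
  · simp

end CommSemiring

section IsDomain

variable {σ R : Type*} [CommRing R] [IsDomain R] {G : MvPolynomial σ R} {d : ℕ}

theorem encard_zeros_restrictLine_le (hG : G.IsHomogeneous d) {a : σ → R} (ha : eval a G ≠ 0)
    (x : σ → R) : {t : R | eval (x + t • a) G = 0}.encard ≤ d := by
  have hcoeff : (restrictLine G x a).coeff d ≠ 0 := by
    rwa [coeff_restrictLine_of_isHomogeneous hG]
  have hne : restrictLine G x a ≠ 0 := fun h => hcoeff (by rw [h, Polynomial.coeff_zero])
  have zeros_eq : {t : R | eval (x + t • a) G = 0} = (restrictLine G x a).rootSet R := by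
    ext t
    simp [Polynomial.mem_rootSet, hne, eval_restrictLine]
  rw [zeros_eq, ← (Polynomial.rootSet_finite ..).cast_ncard_eq, Nat.cast_le]
  calc ((restrictLine G x a).rootSet R).ncard
    _ ≤ (restrictLine G x a).natDegree := Polynomial.ncard_rootSet_le ..
    _ ≤ G.totalDegree := natDegree_restrictLine_le x a
    _ ≤ d := hG.totalDegree_le

theorem encard_zeros_inter_coset_le (hG : G.IsHomogeneous d) {a : σ → R} (ha : eval a G ≠ 0)
    (b : (σ → R) ⧸ Submodule.span R {a}) :
    {x : σ → R | eval x G = 0 ∧ (Submodule.span R {a}).mkQ x = b}.encard ≤ d := by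
  obtain ⟨x, rfl⟩ := Submodule.mkQ_surjective _ b
  have subset_image : {y : σ → R | eval y G = 0 ∧
      (Submodule.span R {a}).mkQ y = (Submodule.span R {a}).mkQ x} ⊆
      (fun t : R => x + t • a) '' {t | eval (x + t • a) G = 0} := by
    rintro y ⟨hy, hyx⟩
    obtain ⟨t, ht⟩ := Submodule.mem_span_singleton.mp ((Submodule.Quotient.eq _).mp hyx)
    obtain rfl : y = x + t • a := by rw [ht, add_sub_cancel]
    exact ⟨t, hy, rfl⟩
  exact (Set.encard_le_encard subset_image).trans
    ((Set.encard_image_le ..).trans (encard_zeros_restrictLine_le hG ha x))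

theorem mkQ_span_singleton_ne_zero_of_eval_eq_zero (hG : G.IsHomogeneous d) {a x : σ → R}
    (ha : eval a G ≠ 0) (hx₀ : x ≠ 0) (hx : eval x G = 0) :
    (Submodule.span R {a}).mkQ x ≠ 0 := by
  rw [Submodule.mkQ_apply, Ne, Submodule.Quotient.mk_eq_zero, Submodule.mem_span_singleton]
  rintro ⟨t, rfl⟩
  have ht : t ≠ 0 := left_ne_zero_of_smul hx₀
  rw [eval_smul_of_isHomogeneous hG] at hx
  exact mul_ne_zero (pow_ne_zero d ht) ha hx

theorem card_lt_of_forall_eval_eq_zero [Finite R] (hG : G.IsHomogeneous d) (hG₀ : G ≠ 0)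
    (h : ∀ x, eval x G = 0) : Nat.card R < d := by
  contrapose! hG₀
  refine hG.eq_zero_of_forall_eval_eq_zero_of_le_card h ?_
  rw [← Nat.cast_card]
  exact_mod_cast hG₀

theorem ncard_nonzero_zeros_le_mul_card_quotient [Finite σ] [Finite R] (hG : G.IsHomogeneous d)
    {a : σ → R} (ha : eval a G ≠ 0) :
    {x : σ → R | x ≠ 0 ∧ eval x G = 0}.ncard ≤
      d * (Nat.card ((σ → R) ⧸ Submodule.span R {a}) - 1) := by
  classical
  have := Fintype.ofFinite (σ → R)
  have := Fintype.ofFinite ((σ → R) ⧸ Submodule.span R {a})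
  rw [Set.ncard_eq_toFinset_card', Nat.card_eq_fintype_card, ← Finset.card_univ,
    ← Finset.card_erase_of_mem (Finset.mem_univ 0)]
  refine Finset.card_le_mul_card_image_of_maps_to (f := (Submodule.span R {a}).mkQ) ?_ d ?_
  · intro x hx
    obtain ⟨hx₀, hxG⟩ := Set.mem_toFinset.mp hx
    exact Finset.mem_erase.mpr
      ⟨mkQ_span_singleton_ne_zero_of_eval_eq_zero hG ha hx₀ hxG, Finset.mem_univ _⟩
  · intro b _
    rw [← Nat.cast_le (α := ℕ∞), ← Set.encard_coe_eq_coe_finsetCard]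
    refine (Set.encard_le_encard fun x hx => ?_).trans (encard_zeros_inter_coset_le hG ha b)
    simp only [Finset.coe_filter, Set.mem_toFinset] at hx
    exact ⟨hx.1.2, hx.2⟩

end IsDomain

section FiniteField

variable {K σ : Type*} [Field K] [Finite K] [Finite σ] {G : MvPolynomial σ K} {d : ℕ}

theorem ncard_nonzero_zeros_le_of_eval_ne_zero (hG : G.IsHomogeneous d) {a : σ → K}
    (ha : eval a G ≠ 0) :
    {x : σ → K | x ≠ 0 ∧ eval x G = 0}.ncard ≤ d * (Nat.card K ^ (Nat.card σ - 1) - 1) := by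
  have := Fintype.ofFinite σ
  rcases eq_or_ne a 0 with rfl | ha₀
  · obtain rfl : d = 0 := by
      by_contra hd
      refine ha ?_
      rw [← zero_smul K (0 : σ → K), eval_smul_of_isHomogeneous hG, zero_pow hd, zero_mul]
    simpa using ncard_nonzero_zeros_le_mul_card_quotient hG ha
  · simpa [card_quotient_span_singleton ha₀] using ncard_nonzero_zeros_le_mul_card_quotient hG ha

theorem ncard_nonzero_zeros_le (hG : G.IsHomogeneous d) (hG₀ : G ≠ 0) :
    {x : σ → K | x ≠ 0 ∧ eval x G = 0}.ncard ≤ d * (Nat.card K ^ (Nat.card σ - 1) - 1) := by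
  by_cases! h : ∃ a, eval a G ≠ 0
  · obtain ⟨a, ha⟩ := h
    exact ncard_nonzero_zeros_le_of_eval_ne_zero hG ha
  have : Nontrivial σ := by
    rw [← not_subsingleton_iff_nontrivial]
    exact fun _ => eval_one_ne_zero_of_subsingleton hG hG₀ (h 1)
  calc {x : σ → K | x ≠ 0 ∧ eval x G = 0}.ncard
    _ ≤ ({0}ᶜ : Set (σ → K)).ncard := Set.ncard_le_ncard fun x hx => hx.1
    _ = Nat.card K ^ Nat.card σ - 1 := by
      rw [Set.ncard_compl, Set.ncard_singleton, Nat.card_fun]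
    _ ≤ d * (Nat.card K ^ (Nat.card σ - 1) - 1) :=
      pow_sub_one_le_mul_pow_pred_sub_one Finite.one_lt_card
        (card_lt_of_forall_eval_eq_zero hG hG₀ h)

end FiniteField

/-- Let `K` be a finite field with `q` elements and let `G ∈ K[t_1,…,t_s]` be a nonzero
polynomial of total degree `d`. Then the number of zeros of `G` in `K^s` is at most
`d * q^(s-1)`; moreover, if `G` is homogeneous, then the number of zeros of `G` in
`K^s \ {0}` is at most `d * (q^(s-1) - 1)`. -/
theorem stmt_0 (K : Type) [Field K] [Fintype K] (q s d : ℕ)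
    (hK : Fintype.card K = q)
    (G : MvPolynomial (Fin s) K) (hG : G ≠ 0) (hd : G.totalDegree = d) :
    Set.ncard {x : Fin s → K | eval x G = 0} ≤ d * q ^ (s - 1) ∧
    (G.IsHomogeneous d →
      Set.ncard {x : Fin s → K | x ≠ 0 ∧ eval x G = 0} ≤ d * (q ^ (s - 1) - 1)) := by
  subst hK hd
  rw [Fintype.card_eq_nat_card]
  refine ⟨ncard_zeros_le hG, fun hom => ?_⟩
  simpa only [Nat.card_fin] using ncard_nonzero_zeros_le hom hG
end

section
/- Let q ≥ 3 be an integer and let d, d', s be positive integers such that d = k(q−2) + ℓ and d' = k'(q−2) + ℓ' for some integers k, k', ℓ, ℓ' satisfying k ≥ 0, k' ≥ 0, 1 ≤ ℓ ≤ q−2 and 1 ≤ ℓ' ≤ q−2. If d' ≤ d and k ≤ s−1, then k' ≤ k and −(q−1)^{s−k'} + ℓ'·(q−1)^{s−k'−1} ≤ −(q−1)^{s−k} + ℓ·(q−1)^{s−k−1}. -/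
/-!
With `Q = q - 1`, the two sides are the values of `-(Q - ℓ) * Q ^ (s - k - 1)` at `(k', ℓ')` and
`(k, ℓ)`. Comparing `d'` with `d` amounts to comparing `(k', ℓ')` with `(k, ℓ)` lexicographically.
For `k' = k` the claim is monotonicity in `ℓ`; for `k' < k` the power `Q ^ (s - k)` separates the
two sides, because `Q - ℓ ≤ Q` and `1 ≤ Q - ℓ'`.
-/

theorem lt_or_eq_and_le_of_mul_add_le_mul_add {m k k' ℓ ℓ' : ℕ} (hℓ : ℓ ≤ m) (hℓ' : 1 ≤ ℓ')
    (h : k' * m + ℓ' ≤ k * m + ℓ) : k' < k ∨ k' = k ∧ ℓ' ≤ ℓ := by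
  rcases lt_trichotomy k' k with hlt | rfl | hgt
  · exact .inl hlt
  · exact .inr ⟨rfl, Nat.le_of_add_le_add_left h⟩
  · have next_block : k * m + m ≤ k' * m := by
      simpa only [Nat.succ_mul] using Nat.mul_le_mul_right m (Nat.succ_le_of_lt hgt)
    omega

section Ring

variable {R : Type*} [Ring R]

theorem neg_pow_add_mul_pow_sub_one {n : ℕ} (hn : n ≠ 0) (Q c : R) :
    -Q ^ n + c * Q ^ (n - 1) = -((Q - c) * Q ^ (n - 1)) := by
  rw [sub_mul, mul_pow_sub_one hn, neg_sub, neg_add_eq_sub]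

variable [PartialOrder R] [IsOrderedRing R]

theorem sub_mul_pow_le_sub_mul_pow_of_lt {Q c c' : R} {a b : ℕ} (hQ : 1 ≤ Q) (hc : 0 ≤ c)
    (hc' : 1 ≤ Q - c') (hab : a < b) : (Q - c) * Q ^ a ≤ (Q - c') * Q ^ b := by
  have pow_Q_nonneg (n : ℕ) : 0 ≤ Q ^ n := pow_nonneg (zero_le_one.trans hQ) n
  calc
    (Q - c) * Q ^ a ≤ Q * Q ^ a := mul_le_mul_of_nonneg_right (sub_le_self Q hc) (pow_Q_nonneg a)
    _ = Q ^ (a + 1) := (pow_succ' Q a).symm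
    _ ≤ Q ^ b := pow_le_pow_right₀ hQ hab
    _ ≤ (Q - c') * Q ^ b := le_mul_of_one_le_left (pow_Q_nonneg b) hc'

theorem stmt_2_general {Q : R} {m s k k' ℓ ℓ' : ℕ} (hQ : (m : R) + 1 ≤ Q)
    (hℓ : ℓ ≤ m) (hℓ' : 1 ≤ ℓ') (hℓm' : ℓ' ≤ m)
    (h : k' * m + ℓ' ≤ k * m + ℓ) (hks : k < s) :
    k' ≤ k ∧
    -Q ^ (s - k') + (ℓ' : R) * Q ^ (s - k' - 1) ≤ -Q ^ (s - k) + (ℓ : R) * Q ^ (s - k - 1) := by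
  have one_le : 1 ≤ Q := (le_add_of_nonneg_left m.cast_nonneg).trans hQ
  rcases lt_or_eq_and_le_of_mul_add_le_mul_add hℓ hℓ' h with hlt | ⟨rfl, hle⟩
  · have one_le_sub : 1 ≤ Q - (ℓ' : R) :=
      le_sub_iff_add_le'.mpr ((add_le_add_left (Nat.mono_cast hℓm') 1).trans hQ)
    refine ⟨hlt.le, ?_⟩
    rw [neg_pow_add_mul_pow_sub_one (by omega), neg_pow_add_mul_pow_sub_one (by omega)]
    exact neg_le_neg <|
      sub_mul_pow_le_sub_mul_pow_of_lt one_le ℓ.cast_nonneg one_le_sub (by omega)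
  · have pow_Q_nonneg : 0 ≤ Q ^ (s - k' - 1) := pow_nonneg (zero_le_one.trans one_le) _
    exact ⟨le_rfl, by gcongr⟩

end Ring

/-- Let `q ≥ 3` and let `d, d', s` be positive integers with `d = k(q-2) + ℓ` and
`d' = k'(q-2) + ℓ'`, where `k, k' ≥ 0` and `1 ≤ ℓ, ℓ' ≤ q-2`. If `d' ≤ d` and
`k ≤ s-1`, then `k' ≤ k` and
`-(q-1)^(s-k') + ℓ'(q-1)^(s-k'-1) ≤ -(q-1)^(s-k) + ℓ(q-1)^(s-k-1)`. -/
theorem stmt_2 (q d d' s k k' ℓ ℓ' : ℕ) (hq : 3 ≤ q)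
    (hd : 1 ≤ d) (hd' : 1 ≤ d') (hs : 1 ≤ s)
    (hdk : d = k * (q - 2) + ℓ) (hdk' : d' = k' * (q - 2) + ℓ')
    (hl1 : 1 ≤ ℓ) (hl2 : ℓ ≤ q - 2) (hl1' : 1 ≤ ℓ') (hl2' : ℓ' ≤ q - 2)
    (hdd : d' ≤ d) (hks : k ≤ s - 1) :
    k' ≤ k ∧
    -((q - 1 : ℤ)) ^ (s - k') + (ℓ' : ℤ) * (q - 1 : ℤ) ^ (s - k' - 1) ≤
      -((q - 1 : ℤ)) ^ (s - k) + (ℓ : ℤ) * (q - 1 : ℤ) ^ (s - k - 1) := by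
  have hQ : ((q - 2 : ℕ) : ℤ) + 1 ≤ q - 1 := by omega
  exact stmt_2_general hQ hl2 hl1' hl2' (hdk' ▸ hdk ▸ hdd) (by omega)
end

section
/- Let K be a finite field with q elements and let G ∈ K[t_1,…,t_s] be a nonzero polynomial of total degree d ≥ 1 such that the degree of G in each variable t_i is at most q−2 for i = 1,…,s. If d = k(q−2) + ℓ with 1 ≤ ℓ ≤ q−2 and 0 ≤ k ≤ s−1, then the number of zeros of G in the affine torus (K*)^s satisfies |Z_G| ≤ (q−1)^{s−k−1}·((q−1)^{k+1} − (q−1) + ℓ). -/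
open MvPolynomial

/-!
Regard `G` as a polynomial in its first variable. Wherever the leading coefficient does not vanish,
a fibre of size `m` contains at least `m - deg` nonzeros, so by induction some monomial `t ^ a` of
`G` satisfies `∏ (m - a i) ≤ #nonzeros` on every grid with sides of size `m`. Since
`∑ a i ≤ k (m - 1) + ℓ` and `a i ≤ m - 1`, shifting degree between two variables so as to spread
their exponents only decreases the product; the extreme case has `k` exponents equal to `m - 1`, one
equal to `ℓ` and the others zero, where the product is `m ^ (n - k - 1) * (m - ℓ)`. The torus is the
grid with all sides equal to `K ∖ {0}`, of size `m = q - 1`.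
-/

section ProductBound

lemma mul_le_mul_of_add_eq_add_of_le {R : Type*} [CommSemiring R] [PartialOrder R]
    [IsStrictOrderedRing R] [ExistsAddOfLE R] {u v w p : R}
    (hsum : u + v = p + w) (hwu : w ≤ u) (hup : u ≤ p) : p * w ≤ u * v := by
  obtain ⟨x, rfl⟩ := exists_add_of_le hwu
  obtain ⟨y, rfl⟩ := exists_add_of_le hup
  have hv : v = w + y := add_left_cancel (a := w + x) (by rw [hsum]; ring)
  have hxy : 0 ≤ x * y := mul_nonneg (nonneg_of_le_add_right hwu) (nonneg_of_le_add_right hup)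
  calc (w + x + y) * w ≤ (w + x + y) * w + x * y := le_add_of_nonneg_right hxy
    _ = (w + x) * v := by rw [hv]; ring

variable {ι : Type*} {m k ℓ : ℕ} {s : Finset ι} {a : ι → ℕ}

lemma pow_card_mul_sub_le_pow_mul_prod_sub (ha : ∀ i ∈ s, a i < m) (hℓ : ℓ ≤ m)
    (hsum : ∑ i ∈ s, a i ≤ k * (m - 1) + ℓ) :
    m ^ s.card * (m - ℓ) ≤ m ^ (k + 1) * ∏ i ∈ s, (m - a i) := by
  induction s using Finset.cons_induction generalizing k ℓ with
  | empty =>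
    calc m ^ 0 * (m - ℓ) ≤ m := by simp
      _ ≤ m ^ (k + 1) * 1 := by simpa using Nat.le_self_pow k.succ_ne_zero m
  | cons j s hj ih =>
    rw [Finset.forall_mem_cons] at ha
    obtain ⟨hajm, has⟩ := ha
    rw [Finset.sum_cons] at hsum
    rw [Finset.card_cons, Finset.prod_cons]
    rcases le_or_gt (a j) ℓ with hjℓ | hℓj
    · have exchange : m * (m - ℓ) ≤ (m - a j) * (m - (ℓ - a j)) :=
        mul_le_mul_of_add_eq_add_of_le (by omega) (by omega) (by omega)
      calc m ^ (s.card + 1) * (m - ℓ) = m ^ s.card * (m * (m - ℓ)) := by ring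
        _ ≤ m ^ s.card * ((m - a j) * (m - (ℓ - a j))) := by gcongr
        _ = (m - a j) * (m ^ s.card * (m - (ℓ - a j))) := by ring
        _ ≤ (m - a j) * (m ^ (k + 1) * ∏ i ∈ s, (m - a i)) :=
          Nat.mul_le_mul_left _ (ih has (by omega) (by omega))
        _ = m ^ (k + 1) * ((m - a j) * ∏ i ∈ s, (m - a i)) := by ring
    · -- The excess `a j - ℓ` is borrowed from one of the `k` blocks of size `m - 1`.
      obtain ⟨k, rfl⟩ : ∃ k', k = k' + 1 :=
        Nat.exists_eq_succ_of_ne_zero (by rintro rfl; omega)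
      rw [Nat.succ_mul] at hsum
      have exchange : m - ℓ ≤ (m - a j) * (m - (ℓ + (m - 1) - a j)) := by
        simpa using mul_le_mul_of_add_eq_add_of_le (p := m - ℓ) (w := 1) (u := m - a j)
          (v := m - (ℓ + (m - 1) - a j)) (by omega) (by omega) (by omega)
      calc m ^ (s.card + 1) * (m - ℓ)
          ≤ m ^ (s.card + 1) * ((m - a j) * (m - (ℓ + (m - 1) - a j))) := by gcongr
        _ = m * (m - a j) * (m ^ s.card * (m - (ℓ + (m - 1) - a j))) := by ring
        _ ≤ m * (m - a j) * (m ^ (k + 1) * ∏ i ∈ s, (m - a i)) :=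
          Nat.mul_le_mul_left _ (ih has (by omega) (by omega))
        _ = m ^ (k + 1 + 1) * ((m - a j) * ∏ i ∈ s, (m - a i)) := by ring

lemma pow_mul_sub_le_prod_sub (ha : ∀ i ∈ s, a i < m) (hℓ : ℓ ≤ m) (hk : k < s.card)
    (hsum : ∑ i ∈ s, a i ≤ k * (m - 1) + ℓ) :
    m ^ (s.card - k - 1) * (m - ℓ) ≤ ∏ i ∈ s, (m - a i) := by
  obtain ⟨i, hi⟩ : s.Nonempty := Finset.card_pos.mp (by omega)
  have hm : 0 < m := (Nat.zero_le _).trans_lt (ha i hi)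
  refine Nat.le_of_mul_le_mul_left ?_ (pow_pos hm (k + 1))
  calc m ^ (k + 1) * (m ^ (s.card - k - 1) * (m - ℓ)) = m ^ s.card * (m - ℓ) := by
        rw [← mul_assoc, ← pow_add, show k + 1 + (s.card - k - 1) = s.card by omega]
    _ ≤ m ^ (k + 1) * ∏ i ∈ s, (m - a i) := pow_card_mul_sub_le_pow_mul_prod_sub ha hℓ hsum

end ProductBound

section GridNonzeros

open Finset Fintype

lemma card_filter_piFinset_eq_sum_card_filter_cons {n : ℕ} {α : Fin (n + 1) → Type*}
    (S : ∀ i, Finset (α i)) (P : (∀ i, α i) → Prop) [DecidablePred P] :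
    #{x ∈ piFinset S | P x} = ∑ y ∈ piFinset (Fin.tail S), #{x₀ ∈ S 0 | P (Fin.cons x₀ y)} := by
  have hgrid : piFinset S =
      (S 0 ×ˢ piFinset (Fin.tail S)).map (Fin.consEquiv α).toEmbedding := by
    simpa using filter_piFinset_eq_map_consEquiv S fun _ ↦ True
  simp only [card_filter, hgrid, sum_map, sum_product_right]
  rfl

variable {R : Type*} [CommRing R] [IsDomain R] [DecidableEq R]

lemma card_sub_natDegree_le_card_filter_eval_ne_zero {p : Polynomial R} (hp : p ≠ 0)
    (S : Finset R) : #S - p.natDegree ≤ #{x ∈ S | p.eval x ≠ 0} := by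
  have hzeros : #{x ∈ S | p.eval x = 0} ≤ p.natDegree :=
    Polynomial.card_le_degree_of_subset_roots fun x hx ↦ by simp_all
  have hsplit := card_filter_add_card_filter_not (s := S) fun x ↦ p.eval x = 0
  simp only [ne_eq]
  omega

lemma card_sub_natDegree_finSuccEquiv_le_card_filter_eval_cons_ne_zero {n : ℕ}
    {G : MvPolynomial (Fin (n + 1)) R} {y : Fin n → R}
    (hy : eval y (finSuccEquiv R n G).leadingCoeff ≠ 0) (S : Finset R) :
    #S - (finSuccEquiv R n G).natDegree ≤
      #{x₀ ∈ S | eval (Fin.cons x₀ y : Fin (n + 1) → R) G ≠ 0} := by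
  simp only [eval_eq_eval_mv_eval']
  rw [← Polynomial.natDegree_map_of_leadingCoeff_ne_zero (eval y) hy]
  refine card_sub_natDegree_le_card_filter_eval_ne_zero (fun hzero ↦ hy ?_) S
  rw [Polynomial.leadingCoeff, ← Polynomial.coeff_map, hzero, Polynomial.coeff_zero]

theorem exists_mem_support_prod_card_sub_le_card_filter_eval_ne_zero {n : ℕ}
    {G : MvPolynomial (Fin n) R} (hG : G ≠ 0) (S : Fin n → Finset R) :
    ∃ a ∈ G.support, ∏ i, (#(S i) - a i) ≤ #{x ∈ piFinset S | eval x G ≠ 0} := by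
  induction n with
  | zero =>
    obtain ⟨c, rfl⟩ := C_surjective (Fin 0) G
    have hc : c ≠ 0 := by rintro rfl; exact hG C_0
    exact ⟨0, by simp [hc], by simp [hc]⟩
  | succ n ih =>
    set p := finSuccEquiv R n G
    have hlead : p.leadingCoeff ≠ 0 := by simpa [p] using hG
    obtain ⟨a, ha, hcard⟩ := ih hlead (Fin.tail S)
    refine ⟨a.cons p.natDegree, mem_support_coeff_finSuccEquiv.mp ha, ?_⟩
    set T := {y ∈ piFinset (Fin.tail S) | eval y p.leadingCoeff ≠ 0}
    calc ∏ i, (#(S i) - a.cons p.natDegree i)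
        = (#(S 0) - p.natDegree) * ∏ i, (#(Fin.tail S i) - a i) := by
          simp [Fin.prod_univ_succ, Fin.tail]
      _ ≤ (#(S 0) - p.natDegree) * #T := by gcongr
      _ = ∑ _y ∈ T, (#(S 0) - p.natDegree) := by rw [sum_const, smul_eq_mul, mul_comm]
      _ ≤ ∑ y ∈ T, #{x₀ ∈ S 0 | eval (Fin.cons x₀ y : Fin (n + 1) → R) G ≠ 0} := by
          gcongr with y hy
          exact card_sub_natDegree_finSuccEquiv_le_card_filter_eval_cons_ne_zero
            (mem_filter.mp hy).2 (S 0)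
      _ ≤ ∑ y ∈ piFinset (Fin.tail S),
            #{x₀ ∈ S 0 | eval (Fin.cons x₀ y : Fin (n + 1) → R) G ≠ 0} :=
          sum_le_sum_of_subset (filter_subset _ _)
      _ = #{x ∈ piFinset S | eval x G ≠ 0} :=
          (card_filter_piFinset_eq_sum_card_filter_cons S fun x ↦ eval x G ≠ 0).symm

variable {n m k ℓ : ℕ} {G : MvPolynomial (Fin n) R} {S : Fin n → Finset R}

theorem pow_mul_sub_le_card_filter_eval_ne_zero (hS : ∀ i, #(S i) = m) (hG : G ≠ 0)
    (hvar : ∀ i, G.degreeOf i < m) (hdeg : G.totalDegree ≤ k * (m - 1) + ℓ) (hℓ : ℓ ≤ m)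
    (hk : k < n) :
    m ^ (n - k - 1) * (m - ℓ) ≤ #{x ∈ piFinset S | eval x G ≠ 0} := by
  obtain ⟨a, ha, hcard⟩ := exists_mem_support_prod_card_sub_le_card_filter_eval_ne_zero hG S
  have hsum : ∑ i, a i ≤ k * (m - 1) + ℓ := by
    rw [← Finsupp.sum_fintype a (fun _ e ↦ e) fun _ ↦ rfl]
    exact (le_totalDegree ha).trans hdeg
  have hprod := pow_mul_sub_le_prod_sub (s := univ)
    (fun i _ ↦ (monomial_le_degreeOf i ha).trans_lt (hvar i)) hℓ (by simpa using hk) hsum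
  simp only [hS] at hcard
  rw [card_univ, Fintype.card_fin] at hprod
  exact hprod.trans hcard

theorem stmt_3_general (hS : ∀ i, #(S i) = m) (hG : G ≠ 0)
    (hvar : ∀ i, G.degreeOf i < m) (hdeg : G.totalDegree ≤ k * (m - 1) + ℓ) (hℓ : ℓ ≤ m)
    (hk : k < n) :
    #{x ∈ piFinset S | eval x G = 0} ≤ m ^ (n - k - 1) * (m ^ (k + 1) - m + ℓ) := by
  have hnonzeros := pow_mul_sub_le_card_filter_eval_ne_zero hS hG hvar hdeg hℓ hk
  have hgrid : #(piFinset S) = m ^ n := by simp [hS]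
  have hsplit := card_filter_add_card_filter_not (s := piFinset S) fun x ↦ eval x G = 0
  have hbounds : m ^ (n - k - 1) * (m ^ (k + 1) - m + ℓ) + m ^ (n - k - 1) * (m - ℓ) = m ^ n := by
    have hm : m ≤ m ^ (k + 1) := Nat.le_self_pow k.succ_ne_zero m
    rw [← mul_add, show m ^ (k + 1) - m + ℓ + (m - ℓ) = m ^ (k + 1) by omega, ← pow_add,
      show n - k - 1 + (k + 1) = n by omega]
  simp only [ne_eq] at hnonzeros
  omega

end GridNonzeros

/-- Let `K` be a finite field with `q` elements and let `G ∈ K[t_1,…,t_s]` be a nonzero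
polynomial of total degree `d ≥ 1` whose degree in each variable is at most `q-2`.
If `d = k(q-2) + ℓ` with `1 ≤ ℓ ≤ q-2` and `0 ≤ k ≤ s-1`, then the number of zeros of
`G` in the affine torus `(K*)^s` is at most `(q-1)^(s-k-1) * ((q-1)^(k+1) - (q-1) + ℓ)`. -/
theorem stmt_3 (K : Type) [Field K] [Fintype K] (q s d k ℓ : ℕ)
    (hK : Fintype.card K = q)
    (G : MvPolynomial (Fin s) K) (hG : G ≠ 0) (hdeg : G.totalDegree = d)
    (hd1 : 1 ≤ d) (hvar : ∀ i : Fin s, G.degreeOf i ≤ q - 2)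
    (hdk : d = k * (q - 2) + ℓ) (hl1 : 1 ≤ ℓ) (hl2 : ℓ ≤ q - 2) (hks : k ≤ s - 1) :
    Set.ncard {x : Fin s → K | (∀ i, x i ≠ 0) ∧ eval x G = 0} ≤
      (q - 1) ^ (s - k - 1) * ((q - 1) ^ (k + 1) - (q - 1) + ℓ) := by
  classical
  have hs : s ≠ 0 := by
    rintro rfl
    rw [eq_C_of_isEmpty G, totalDegree_C] at hdeg
    omega
  have htorus : {x : Fin s → K | (∀ i, x i ≠ 0) ∧ eval x G = 0} =
      ↑{x ∈ Fintype.piFinset fun _ : Fin s ↦ Finset.univ.erase (0 : K) | eval x G = 0} := by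
    ext x; simp
  rw [htorus, Set.ncard_coe_finset]
  exact stmt_3_general (fun _ ↦ by simp [hK]) hG (fun i ↦ by have := hvar i; omega)
    (by rw [hdeg, hdk, Nat.sub_sub]) (by omega) (by omega)
end

section
/- Let K be a finite field with q elements, q ≥ 3, let s ≥ 2, and let T be the projective torus in ℙ^{s−1} over K. Let d ≥ 1 and write d = k(q−2) + ℓ with the unique integers k, ℓ satisfying k ≥ 0 and 1 ≤ ℓ ≤ q−2. Then the minimum distance of the parameterized code C_T(d) is δ_d = (q−1)^{s−(k+2)}·(q−1−ℓ) if d ≤ (q−2)(s−1) − 1, and δ_d = 1 if d ≥ (q−2)(s−1). -/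
open MvPolynomial

/-- The projective torus in `ℙ^(s-1)` over `K`: the classes of points all of whose
coordinates are nonzero (a condition invariant under scaling, tested on the chosen
representative). -/
noncomputable def projTorus (K : Type) [Field K] (s : ℕ) :
    Set (Projectivization K (Fin s → K)) :=
  {p | ∀ i, p.rep i ≠ 0}

/-- The minimum distance of the parameterized (evaluation) code of order `d` on a set
`Y` of points of projective space: the least number of points of `Y` at which a
homogeneous polynomial of degree `d` not vanishing identically on `Y` is nonzero. -/
noncomputable def minDist (K : Type) [Field K] {ι : Type}
    (Y : Set (Projectivization K (ι → K))) (d : ℕ) : ℕ :=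
  sInf {n | ∃ F : MvPolynomial ι K, F.IsHomogeneous d ∧
    (∃ p ∈ Y, eval p.rep F ≠ 0) ∧
    n = Set.ncard {p ∈ Y | eval p.rep F ≠ 0}}

/-!
Setting the first coordinate to `1` identifies the torus with the grid `(K*)^(s-1)`, and forms of
degree `d` with polynomials of degree at most `d`. By the Alon–Füredi argument, such a polynomial,
if it does not vanish on the whole grid, has at least `∏ (q - 1 - c i)` nonzeros for some
`c i ≤ q - 2` with `∑ c i ≤ d`; conversely, a product of `∑ c i` linear forms `X i - b X 0`, `c i`
of them in each direction, attains this value. It remains to minimize the product. Moving weight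
from one `c i` to another, so that they become more unequal, decreases it, so the minimum is at
`c = (q - 2, …, q - 2, ℓ, 0, …, 0)`, or at `c = (q - 2, …, q - 2)` when `d ≥ (q - 2)(s - 1)`.
-/

open Finset

section AlonFurediProducts

/-- The products `∏ i, (a i - c i)` obtained by lowering each side of a box with side lengths `a i`
by some `c i < a i`, by at most `d` altogether. The least of them is the Alon–Füredi bound on the
number of nonzeros of a polynomial of degree at most `d` on an `∏ i, a i` grid. -/
def alonFurediProducts {ι : Type*} [Fintype ι] (a : ι → ℕ) (d : ℕ) : Set ℕ :=
  {N | ∃ c : ι → ℕ, (∀ i, c i < a i) ∧ ∑ i, c i ≤ d ∧ ∏ i, (a i - c i) = N}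

theorem pos_of_mem_alonFurediProducts {ι : Type*} [Fintype ι] {a : ι → ℕ} {d N : ℕ}
    (hN : N ∈ alonFurediProducts a d) : 0 < N := by
  obtain ⟨c, hc, -, rfl⟩ := hN
  exact prod_pos fun i _ ↦ Nat.sub_pos_of_lt (hc i)

theorem mul_mem_alonFurediProducts_cons {n b d N : ℕ} {a : Fin n → ℕ} (hb : 0 < b)
    (hN : N ∈ alonFurediProducts a d) :
    b * N ∈ alonFurediProducts (Fin.cons b a : Fin (n + 1) → ℕ) d := by
  obtain ⟨c, hc, hcd, rfl⟩ := hN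
  refine ⟨Fin.cons 0 c, Fin.cases (by simpa using hb) (by simpa using hc), ?_, ?_⟩
  · simpa [Fin.sum_univ_succ] using hcd
  · simp [Fin.prod_univ_succ]

theorem mem_alonFurediProducts_cons_succ {n b d N : ℕ} {a : Fin n → ℕ}
    (hN : N ∈ alonFurediProducts (Fin.cons b a : Fin (n + 1) → ℕ) d) :
    N ∈ alonFurediProducts (Fin.cons (b + 1) a : Fin (n + 1) → ℕ) (d + 1) := by
  obtain ⟨c, hc, hcd, rfl⟩ := hN
  have hlt : ∀ i, (Fin.cons (c 0 + 1) (Fin.tail c) : Fin (n + 1) → ℕ) i <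
      (Fin.cons (b + 1) a : Fin (n + 1) → ℕ) i := by
    refine Fin.cases ?_ fun i ↦ ?_
    · simpa using hc 0
    · simpa [Fin.tail] using hc i.succ
  refine ⟨Fin.cons (c 0 + 1) (Fin.tail c), hlt, ?_, ?_⟩
  · simp only [Fin.sum_univ_succ, Fin.cons_zero, Fin.cons_succ, Fin.tail] at hcd ⊢
    omega
  · simp [Fin.prod_univ_succ, Fin.tail]

theorem mul_sub_le_sub_mul_sub {m t ℓ : ℕ} (htℓ : t ≤ ℓ) (hℓm : ℓ ≤ m) :
    m * (m - ℓ) ≤ (m - t) * (m - (ℓ - t)) := by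
  zify [htℓ, hℓm, htℓ.trans hℓm, (Nat.sub_le ℓ t).trans hℓm]
  nlinarith [mul_nonneg (Nat.cast_nonneg (α := ℤ) t) (sub_nonneg.2 (Nat.cast_le (α := ℤ).2 htℓ))]

theorem sub_le_sub_mul_sub_add_one {m t ℓ : ℕ} (hℓt : ℓ ≤ t) (htm : t < m) :
    m - ℓ ≤ (m - t) * (t - ℓ + 1) := by
  calc m - ℓ = 1 * (t - ℓ) + (m - t) := by omega
    _ ≤ (m - t) * (t - ℓ) + (m - t) :=
      Nat.add_le_add_right (Nat.mul_le_mul_right _ (Nat.sub_pos_of_lt htm)) _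
    _ = (m - t) * (t - ℓ + 1) := by ring

theorem pow_mul_sub_le_prod_sub_s4 {m n k r ℓ : ℕ} {c : Fin n → ℕ} (hn : n = k + (r + 1))
    (hℓ : ℓ < m) (hc : ∀ i, c i < m) (hsum : ∑ i, c i ≤ k * (m - 1) + ℓ) :
    m ^ r * (m - ℓ) ≤ ∏ i, (m - c i) := by
  induction n generalizing k r ℓ with
  | zero => omega
  | succ n ih =>
    rw [Fin.sum_univ_succ] at hsum
    rw [Fin.prod_univ_succ]
    have htail : ∀ i : Fin n, c i.succ < m := fun i ↦ hc i.succ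
    rcases le_or_gt (c 0) ℓ with h0 | h0
    · rcases r with - | r
      · have hpos : 1 ≤ ∏ i : Fin n, (m - c i.succ) :=
          prod_pos fun i _ ↦ Nat.sub_pos_of_lt (htail i)
        simpa using Nat.mul_le_mul (Nat.sub_le_sub_left h0 m) hpos
      · calc m ^ (r + 1) * (m - ℓ) = m ^ r * (m * (m - ℓ)) := by ring
          _ ≤ m ^ r * ((m - c 0) * (m - (ℓ - c 0))) :=
            Nat.mul_le_mul_left _ (mul_sub_le_sub_mul_sub h0 hℓ.le)
          _ = (m - c 0) * (m ^ r * (m - (ℓ - c 0))) := by ring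
          _ ≤ _ := Nat.mul_le_mul_left _ (ih (k := k) (by omega) (by omega) htail (by omega))
    · have hm := hc 0
      rcases k with - | k
      · omega
      · have hrest : m - (m - 1 + ℓ - c 0) = c 0 - ℓ + 1 := by omega
        calc m ^ r * (m - ℓ) ≤ m ^ r * ((m - c 0) * (c 0 - ℓ + 1)) :=
            Nat.mul_le_mul_left _ (sub_le_sub_mul_sub_add_one h0.le hm)
          _ = (m - c 0) * (m ^ r * (m - (m - 1 + ℓ - c 0))) := by rw [hrest]; ring
          _ ≤ _ := Nat.mul_le_mul_left _
            (ih (k := k) (by omega) (by omega) htail (by rw [add_one_mul] at hsum; omega))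

theorem isLeast_alonFurediProducts_const {m ℓ : ℕ} (k r : ℕ) (hℓ : ℓ < m) :
    IsLeast (alonFurediProducts (fun _ : Fin (k + (r + 1)) ↦ m) (k * (m - 1) + ℓ))
      (m ^ r * (m - ℓ)) := by
  constructor
  · refine ⟨Fin.append (fun _ : Fin k ↦ m - 1) (Fin.cons ℓ 0 : Fin (r + 1) → ℕ), ?_, ?_, ?_⟩
    · have hm : 0 < m := Nat.zero_lt_of_lt hℓ
      refine Fin.addCases (fun i ↦ ?_) (Fin.cases ?_ fun i ↦ ?_) <;> simp [hm, hℓ]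
    · simp [Fin.sum_univ_add, Fin.sum_univ_succ]
    · have hone : m - (m - 1) = 1 := by omega
      simp [Fin.prod_univ_add, Fin.prod_univ_succ, hone, mul_comm]
  · rintro N ⟨c, hc, hcd, rfl⟩
    exact pow_mul_sub_le_prod_sub_s4 rfl hℓ hc hcd

theorem isLeast_one_alonFurediProducts {ι : Type*} [Fintype ι] {a : ι → ℕ} {d : ℕ}
    (ha : ∀ i, 0 < a i) (hd : ∑ i, (a i - 1) ≤ d) : IsLeast (alonFurediProducts a d) 1 := by
  refine ⟨⟨fun i ↦ a i - 1, fun i ↦ Nat.sub_one_lt (ha i).ne', hd, ?_⟩,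
    fun N ↦ pos_of_mem_alonFurediProducts⟩
  exact prod_eq_one fun i _ ↦ Nat.sub_sub_self (ha i)

end AlonFurediProducts

section EvaluationAndDegree

variable {R σ : Type*} [CommSemiring R]

theorem eval_smul_of_isHomogeneous_s4 {d : ℕ} {F : MvPolynomial σ R} (hF : F.IsHomogeneous d)
    (a : R) (v : σ → R) : eval (a • v) F = a ^ d * eval v F := by
  rw [eval_eq, eval_eq, mul_sum]
  refine sum_congr rfl fun e he ↦ ?_
  have hdeg : ∑ i ∈ e.support, e i = d := by
    rw [← Finsupp.degree_apply, Finsupp.degree_eq_weight_one]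
    exact hF (mem_support_iff.1 he)
  simp only [Pi.smul_apply, smul_eq_mul, mul_pow, prod_mul_distrib, prod_pow_eq_pow_sum, hdeg]
  ring

theorem totalDegree_aeval_le_of_totalDegree_le_one {τ : Type*} {g : σ → MvPolynomial τ R}
    (hg : ∀ i, (g i).totalDegree ≤ 1) (f : MvPolynomial σ R) :
    (aeval g f).totalDegree ≤ f.totalDegree := by
  rw [aeval_def, eval₂_eq]
  refine totalDegree_finsetSum_le fun e he ↦ ?_
  calc (C (coeff e f) * ∏ i ∈ e.support, g i ^ e i).totalDegree
      ≤ (∏ i ∈ e.support, g i ^ e i).totalDegree := by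
        simpa using totalDegree_mul (C (coeff e f)) (∏ i ∈ e.support, g i ^ e i)
    _ ≤ ∑ i ∈ e.support, (g i ^ e i).totalDegree := totalDegree_finsetProd _ _
    _ ≤ ∑ i ∈ e.support, e i := sum_le_sum fun i _ ↦
        (totalDegree_pow _ _).trans (by simpa using Nat.mul_le_mul_left (e i) (hg i))
    _ ≤ f.totalDegree := le_totalDegree he

end EvaluationAndDegree

section FixHead

variable {R : Type*} {n : ℕ}

section CommSemiring

variable [CommSemiring R]

/-- The polynomial `f(a, X₀, …, Xₙ₋₁)`: a slice of `f`, and its dehomogenization when `a = 1`. -/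
noncomputable def fixHead (a : R) : MvPolynomial (Fin (n + 1)) R →ₐ[R] MvPolynomial (Fin n) R :=
  aeval (Fin.cons (C a) X : Fin (n + 1) → MvPolynomial (Fin n) R)

theorem eval_fixHead (a : R) (x : Fin n → R) (f : MvPolynomial (Fin (n + 1)) R) :
    eval x (fixHead a f) = eval (Fin.cons a x : Fin (n + 1) → R) f := by
  have hhom : (aeval x).comp (fixHead a) = aeval (Fin.cons a x : Fin (n + 1) → R) := by
    ext i
    refine Fin.cases ?_ (fun i ↦ ?_) i <;> simp [fixHead]
  simpa [coe_aeval_eq_eval] using DFunLike.congr_fun hhom f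

theorem totalDegree_fixHead_le (a : R) (f : MvPolynomial (Fin (n + 1)) R) :
    (fixHead a f).totalDegree ≤ f.totalDegree := by
  refine totalDegree_aeval_le_of_totalDegree_le_one (Fin.cases ?_ fun i ↦ ?_) f
  · simp
  · simpa using (isHomogeneous_X R i).totalDegree_le

end CommSemiring

variable [CommRing R]

theorem X_zero_sub_C_dvd_sub_rename_fixHead (a : R) (f : MvPolynomial (Fin (n + 1)) R) :
    X 0 - C a ∣ f - rename Fin.succ (fixHead a f) := by
  rw [← Ideal.mem_span_singleton, ← Ideal.Quotient.mk_eq_mk_iff_sub_mem]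
  let π := Ideal.Quotient.mkₐ R (Ideal.span {(X 0 - C a : MvPolynomial (Fin (n + 1)) R)})
  have hπ : π = (π.comp (rename Fin.succ)).comp (fixHead a) := by
    ext i
    refine Fin.cases ?_ (fun i ↦ ?_) i
    · simp [π, fixHead, Ideal.Quotient.mk_eq_mk_iff_sub_mem]
    · simp [π, fixHead]
  exact DFunLike.congr_fun hπ f

theorem exists_eq_rename_fixHead_add_mul [IsDomain R] (a : R)
    (f : MvPolynomial (Fin (n + 1)) R) :
    ∃ h : MvPolynomial (Fin (n + 1)) R, (h = 0 ∨ h.totalDegree + 1 ≤ f.totalDegree) ∧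
      f = rename Fin.succ (fixHead a f) + (X 0 - C a) * h := by
  obtain ⟨h, hh⟩ := X_zero_sub_C_dvd_sub_rename_fixHead a f
  refine ⟨h, or_iff_not_imp_left.2 fun hne ↦ ?_, by rw [← hh, add_sub_cancel]⟩
  have hdeg : (X 0 - C a : MvPolynomial (Fin (n + 1)) R).totalDegree = 1 := by
    rw [sub_eq_add_neg, ← C_neg, totalDegree_add_eq_left_of_totalDegree_lt (by simp), totalDegree_X]
  have hne' : (X 0 - C a : MvPolynomial (Fin (n + 1)) R) ≠ 0 := by
    rintro h0
    simp [h0] at hdeg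
  calc h.totalDegree + 1 = ((X 0 - C a) * h).totalDegree := by
        rw [totalDegree_mul_of_isDomain hne' hne, hdeg, add_comm]
    _ = (f - rename Fin.succ (fixHead a f)).totalDegree := by rw [hh]
    _ ≤ max f.totalDegree (rename Fin.succ (fixHead a f)).totalDegree := totalDegree_sub _ _
    _ ≤ f.totalDegree :=
        max_le le_rfl ((totalDegree_rename_le _ _).trans (totalDegree_fixHead_le a f))

end FixHead

section AlonFuredi

variable {R : Type*} [DecidableEq R] {n : ℕ}

section CommSemiring

variable [CommSemiring R]

/-- The points of the grid `∏ i, A i` at which `f` does not vanish. -/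
noncomputable def gridSupport (A : Fin n → Finset R) (f : MvPolynomial (Fin n) R) :
    Finset (Fin n → R) :=
  {x ∈ Fintype.piFinset A | eval x f ≠ 0}

theorem card_gridSupport_cons (S : Finset R) (A : Fin n → Finset R)
    (f : MvPolynomial (Fin (n + 1)) R) :
    #(gridSupport (Fin.cons S A : Fin (n + 1) → Finset R) f) =
      ∑ a ∈ S, #(gridSupport A (fixHead a f)) := by
  rw [← card_sigma]
  refine card_nbij' (fun x ↦ ⟨x 0, Fin.tail x⟩) (fun p ↦ Fin.cons p.1 p.2) ?_ ?_ ?_ ?_ <;>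
    simp +contextual [Set.MapsTo, Set.LeftInvOn, gridSupport, eval_fixHead, Fin.forall_fin_succ,
      Fin.tail]

end CommSemiring

variable [CommRing R] [IsDomain R]

theorem exists_gridSupport_fixHead_eq {A : Fin n → Finset R} {f : MvPolynomial (Fin (n + 1)) R}
    {a : R} (hfa : gridSupport A (fixHead a f) = ∅) :
    ∃ h : MvPolynomial (Fin (n + 1)) R, (h = 0 ∨ h.totalDegree + 1 ≤ f.totalDegree) ∧
      ∀ b ≠ a, gridSupport A (fixHead b f) = gridSupport A (fixHead b h) := by
  obtain ⟨h, hdeg, hfh⟩ := exists_eq_rename_fixHead_add_mul a f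
  refine ⟨h, hdeg, fun b hb ↦ filter_congr fun x hx ↦ ?_⟩
  have hvanish : eval x (fixHead a f) = 0 := by
    by_contra hne
    exact notMem_empty x (hfa ▸ mem_filter.2 ⟨hx, hne⟩)
  have hfactor : eval x (fixHead b f) = (b - a) * eval x (fixHead b h) := by
    calc eval x (fixHead b f) = eval (Fin.cons b x : Fin (n + 1) → R) f := eval_fixHead b x f
      _ = eval x (fixHead a f) + (b - a) * eval x (fixHead b h) := by
        conv_lhs => rw [hfh]
        simp [eval_rename, Function.comp_def, eval_fixHead]
      _ = (b - a) * eval x (fixHead b h) := by rw [hvanish, zero_add]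
  rw [hfactor, mul_ne_zero_iff, and_iff_right (sub_ne_zero.2 hb)]

theorem exists_mem_alonFurediProducts_le_card_gridSupport_cons {A : Fin n → Finset R}
    (hA : ∀ {d : ℕ} {f : MvPolynomial (Fin n) R}, f.totalDegree ≤ d → (gridSupport A f).Nonempty →
      ∃ N ∈ alonFurediProducts (fun i ↦ #(A i)) d, N ≤ #(gridSupport A f))
    {S : Finset R} {d : ℕ} {f : MvPolynomial (Fin (n + 1)) R} (hd : f.totalDegree ≤ d)
    (hf : (gridSupport (Fin.cons S A : Fin (n + 1) → Finset R) f).Nonempty) :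
    ∃ N ∈ alonFurediProducts (Fin.cons #S (fun i ↦ #(A i)) : Fin (n + 1) → ℕ) d,
      N ≤ #(gridSupport (Fin.cons S A : Fin (n + 1) → Finset R) f) := by
  induction S using Finset.strongInduction generalizing d f with
  | H S ih =>
    -- A slice on which `f` vanishes contributes no nonzeros, and dividing by its linear equation
    -- lowers the degree of `f` by one; without such slices, every slice has at least as many
    -- nonzeros as the poorest one.
    by_cases! hslice : ∃ a ∈ S, gridSupport A (fixHead a f) = ∅
    · obtain ⟨a, ha, hfa⟩ := hslice
      obtain ⟨h, hdeg, hfh⟩ := exists_gridSupport_fixHead_eq hfa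
      have hcard : #(gridSupport (Fin.cons S A : Fin (n + 1) → Finset R) f) =
          #(gridSupport (Fin.cons (S.erase a) A : Fin (n + 1) → Finset R) h) := by
        rw [card_gridSupport_cons, card_gridSupport_cons, ← add_sum_erase S _ ha, hfa, card_empty,
          zero_add]
        exact sum_congr rfl fun b hb ↦ by rw [hfh b (ne_of_mem_erase hb)]
      rw [← card_pos, hcard, card_pos] at hf
      have hh : h ≠ 0 := by
        rintro rfl
        simp [gridSupport] at hf
      obtain ⟨d, rfl⟩ := Nat.exists_eq_add_of_le' ((Nat.le_add_left 1 _).trans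
        ((hdeg.resolve_left hh).trans hd))
      obtain ⟨N, hN, hle⟩ := ih _ (erase_ssubset ha)
        (Nat.le_of_add_le_add_right ((hdeg.resolve_left hh).trans hd)) hf
      refine ⟨N, ?_, hle.trans_eq hcard.symm⟩
      rw [← card_erase_add_one ha]
      exact mem_alonFurediProducts_cons_succ hN
    · have hS : S.Nonempty := by
        rw [nonempty_iff_ne_empty]
        rintro rfl
        simp [← card_pos, card_gridSupport_cons] at hf
      obtain ⟨a, ha, hmin⟩ := exists_min_image S (fun a ↦ #(gridSupport A (fixHead a f))) hS
      obtain ⟨N, hN, hle⟩ := hA ((totalDegree_fixHead_le a f).trans hd)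
        (hslice a ha)
      refine ⟨#S * N, mul_mem_alonFurediProducts_cons hS.card_pos hN, ?_⟩
      rw [card_gridSupport_cons, ← smul_eq_mul]
      exact card_nsmul_le_sum S _ N fun b hb ↦ hle.trans (hmin b hb)

theorem exists_mem_alonFurediProducts_le_card_gridSupport (A : Fin n → Finset R) {d : ℕ}
    {f : MvPolynomial (Fin n) R} (hd : f.totalDegree ≤ d) (hf : (gridSupport A f).Nonempty) :
    ∃ N ∈ alonFurediProducts (fun i ↦ #(A i)) d, N ≤ #(gridSupport A f) := by
  induction A using Fin.consInduction generalizing d with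
  | elim0 => exact ⟨1, ⟨Fin.elim0, by simp⟩, hf.card_pos⟩
  | cons S A ih =>
    have hsides : (fun i ↦ #((Fin.cons S A : Fin _ → Finset R) i)) =
        Fin.cons #S fun i ↦ #(A i) := Fin.comp_cons card S A
    rw [hsides]
    exact exists_mem_alonFurediProducts_le_card_gridSupport_cons ih hd hf

theorem exists_isHomogeneous_card_gridSupport_eq {A : Fin n → Finset R} {d N : ℕ}
    (hN : N ∈ alonFurediProducts (fun i ↦ #(A i)) d) :
    ∃ F : MvPolynomial (Fin (n + 1)) R, F.IsHomogeneous d ∧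
      #(gridSupport A (fixHead 1 F)) = N := by
  obtain ⟨c, hc, hcd, rfl⟩ := hN
  choose B hBA hB using fun i ↦ exists_subset_card_eq (hc i).le
  let L (i : Fin n) (b : R) : MvPolynomial (Fin (n + 1)) R := X i.succ - C b * X 0
  let F : MvPolynomial (Fin (n + 1)) R := (∏ i, ∏ b ∈ B i, L i b) * X 0 ^ (d - ∑ i, c i)
  refine ⟨F, ?_, ?_⟩
  · have hL (i : Fin n) : (∏ b ∈ B i, L i b).IsHomogeneous (c i) := by
      simpa [hB] using IsHomogeneous.prod (B i) (L i) (fun _ ↦ 1) fun b _ ↦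
        (isHomogeneous_X R i.succ).sub (isHomogeneous_C_mul_X b 0)
    have hF := (IsHomogeneous.prod univ _ c fun i _ ↦ hL i).mul
      (isHomogeneous_X_pow (R := R) (0 : Fin (n + 1)) (d - ∑ i, c i))
    rwa [Nat.add_sub_cancel' hcd] at hF
  · have hsupport : gridSupport A (fixHead 1 F) = Fintype.piFinset fun i ↦ A i \ B i := by
      ext x
      simp [gridSupport, eval_fixHead, F, L, prod_eq_zero_iff, sub_eq_zero, forall_and]
    rw [hsupport, Fintype.card_piFinset]
    exact prod_congr rfl fun i _ ↦ by rw [card_sdiff_of_subset (hBA i), hB]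

end AlonFuredi

section ProjectiveTorus

variable {K : Type} [Field K] {n d : ℕ}

/-- The point `[1 : x₀ : ⋯ : xₙ₋₁]` of projective space. -/
def affineChart (x : Fin n → K) : Projectivization K (Fin (n + 1) → K) :=
  .mk K (Fin.cons 1 x) fun h ↦ one_ne_zero (congrFun h 0)

theorem affineChart_injective : Function.Injective (affineChart (K := K) (n := n)) := by
  intro x y hxy
  obtain ⟨a, ha⟩ := (Projectivization.mk_eq_mk_iff' ..).1 hxy
  have ha1 : a = 1 := by simpa using congrFun ha 0
  funext i
  simpa [ha1] using (congrFun ha i.succ).symm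

theorem exists_affineChart_eq {p : Projectivization K (Fin (n + 1) → K)} (hp : p.rep 0 ≠ 0) :
    ∃ x, affineChart x = p := by
  refine ⟨fun i ↦ (p.rep 0)⁻¹ * p.rep i.succ, ?_⟩
  conv_rhs => rw [← p.mk_rep]
  refine (Projectivization.mk_eq_mk_iff' ..).2 ⟨(p.rep 0)⁻¹, funext (Fin.cases ?_ fun i ↦ ?_)⟩
  · simp [hp]
  · simp

theorem exists_rep_affineChart_eq_smul (x : Fin n → K) :
    ∃ a : Kˣ, (affineChart x).rep = (a : K) • (Fin.cons 1 x : Fin (n + 1) → K) :=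
  let ⟨a, ha⟩ := Projectivization.exists_smul_eq_mk_rep K (Fin.cons 1 x : Fin (n + 1) → K) _
  ⟨a, ha.symm⟩

theorem affineChart_mem_projTorus_iff (x : Fin n → K) :
    affineChart x ∈ projTorus K (n + 1) ↔ ∀ i, x i ≠ 0 := by
  obtain ⟨a, ha⟩ := exists_rep_affineChart_eq_smul x
  simp [projTorus, ha, Fin.forall_fin_succ]

theorem eval_rep_affineChart_ne_zero_iff {F : MvPolynomial (Fin (n + 1)) K}
    (hF : F.IsHomogeneous d) (x : Fin n → K) :
    eval (affineChart x).rep F ≠ 0 ↔ eval x (fixHead 1 F) ≠ 0 := by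
  obtain ⟨a, ha⟩ := exists_rep_affineChart_eq_smul x
  simp [ha, eval_smul_of_isHomogeneous_s4 hF, eval_fixHead]

variable [Fintype K]

theorem setOf_mem_projTorus_eval_ne_zero_eq_image [DecidableEq K]
    {F : MvPolynomial (Fin (n + 1)) K} (hF : F.IsHomogeneous d) :
    {p ∈ projTorus K (n + 1) | eval p.rep F ≠ 0} =
      affineChart '' (gridSupport (fun _ ↦ {0}ᶜ) (fixHead 1 F) : Set (Fin n → K)) := by
  ext p
  constructor
  · rintro ⟨hp, hFp⟩
    obtain ⟨x, rfl⟩ := exists_affineChart_eq (hp 0)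
    rw [affineChart_mem_projTorus_iff] at hp
    rw [eval_rep_affineChart_ne_zero_iff hF] at hFp
    exact ⟨x, by simpa [gridSupport] using ⟨hp, hFp⟩, rfl⟩
  · rintro ⟨x, hx, rfl⟩
    simpa [gridSupport, affineChart_mem_projTorus_iff, eval_rep_affineChart_ne_zero_iff hF]
      using hx

theorem minDist_projTorus_eq_sInf [DecidableEq K] :
    minDist K (projTorus K (n + 1)) d =
      sInf {N | ∃ F : MvPolynomial (Fin (n + 1)) K, F.IsHomogeneous d ∧
        (gridSupport (fun _ ↦ {0}ᶜ) (fixHead 1 F)).Nonempty ∧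
        N = #(gridSupport (fun _ ↦ {0}ᶜ) (fixHead 1 F))} := by
  refine congrArg sInf (Set.ext fun N ↦ exists_congr fun F ↦ and_congr_right fun hF ↦ ?_)
  have himage := setOf_mem_projTorus_eval_ne_zero_eq_image hF
  rw [himage, Set.ncard_image_of_injective _ affineChart_injective, Set.ncard_coe_finset]
  refine and_congr_left' ?_
  rw [← coe_nonempty, ← Set.image_nonempty, ← himage]
  rfl

theorem minDist_projTorus_eq_of_isLeast {B : ℕ}
    (hB : IsLeast (alonFurediProducts (fun _ : Fin n ↦ Fintype.card K - 1) d) B) :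
    minDist K (projTorus K (n + 1)) d = B := by
  classical
  have hside : (fun _ : Fin n ↦ Fintype.card K - 1) = fun _ ↦ #({0}ᶜ : Finset K) := by
    simp [card_compl]
  rw [hside] at hB
  rw [minDist_projTorus_eq_sInf]
  refine IsLeast.csInf_eq ⟨?_, ?_⟩
  · obtain ⟨F, hF, hcard⟩ := exists_isHomogeneous_card_gridSupport_eq hB.1
    refine ⟨F, hF, ?_, hcard.symm⟩
    rw [← card_pos, hcard]
    exact pos_of_mem_alonFurediProducts hB.1
  · rintro _ ⟨F, hF, hne, rfl⟩
    obtain ⟨N, hN, hle⟩ := exists_mem_alonFurediProducts_le_card_gridSupport _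
      ((totalDegree_fixHead_le 1 F).trans hF.totalDegree_le) hne
    exact (hB.2 hN).trans hle

end ProjectiveTorus

/-- Minimum distance of the parameterized code of order `d` on the projective torus
in `ℙ^(s-1)` over a finite field with `q` elements, where `d = k(q-2) + ℓ`,
`1 ≤ ℓ ≤ q-2`. -/
theorem stmt_4 (K : Type) [Field K] [Fintype K] (q s d k ℓ : ℕ)
    (hK : Fintype.card K = q) (hq : 3 ≤ q) (hs : 2 ≤ s) (hd : 1 ≤ d)
    (hdk : d = k * (q - 2) + ℓ) (hl1 : 1 ≤ ℓ) (hl2 : ℓ ≤ q - 2) :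
    (d ≤ (q - 2) * (s - 1) - 1 →
      minDist K (projTorus K s) d = (q - 1) ^ (s - (k + 2)) * (q - 1 - ℓ)) ∧
    ((q - 2) * (s - 1) ≤ d → minDist K (projTorus K s) d = 1) := by
  obtain ⟨n, rfl⟩ : ∃ n, s = n + 1 := ⟨s - 1, by omega⟩
  rw [Nat.add_sub_cancel]
  constructor
  · intro hsmall
    have hkn : k < n := by
      by_contra! hnk
      have : (q - 2) * n ≤ k * (q - 2) := by
        rw [mul_comm]
        exact Nat.mul_le_mul_right _ hnk
      omega
    obtain ⟨r, rfl⟩ := Nat.exists_eq_add_of_lt hkn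
    have hexp : k + r + 1 + 1 - (k + 2) = r := by omega
    rw [hexp, hdk]
    apply minDist_projTorus_eq_of_isLeast
    rw [hK]
    exact isLeast_alonFurediProducts_const k r (by omega)
  · intro hlarge
    apply minDist_projTorus_eq_of_isLeast
    rw [hK]
    refine isLeast_one_alonFurediProducts (fun _ ↦ by omega) ?_
    simpa [mul_comm, Nat.sub_sub] using hlarge
end

section
/- Let K be a finite field with q elements and let s ≥ 2. A homogeneous polynomial f ∈ K[t_1,…,t_s] vanishes at every point of the affine torus (K*)^s if and only if f belongs to the ideal of K[t_1,…,t_s] generated by t_2^{q−1} − t_1^{q−1}, t_3^{q−1} − t_1^{q−1}, …, t_s^{q−1} − t_1^{q−1}. Consequently, the vanishing ideal I(T) of the projective torus T ⊆ ℙ^{s−1} equals (t_2^{q−1} − t_1^{q−1}, …, t_s^{q−1} − t_1^{q−1}). -/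
open MvPolynomial

/-!
Let `n = q - 1`, so that `K*` is the set of roots of `X ^ n - 1`. If `f` is homogeneous of degree
`e` and vanishes on the torus, Alon's combinatorial Nullstellensatz writes `f` as
`∑ i, hᵢ * (X i ^ n - 1)` with every summand of degree at most `e`. Because of this degree bound,
homogenizing with respect to the first variable `X z` turns the identity into
`f = ∑ i, gᵢ * (X i ^ n - X z ^ n)`. The same argument describes the forms vanishing on the
`n`-th roots of unity of any domain that contains a primitive one.
-/

section Homogenization

variable {R σ : Type*} [CommSemiring R]

/-- Homogenization in degree `e` with respect to `X z`, which is itself one of the variables of the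
polynomial: each monomial is multiplied by the power of `X z` that brings its degree up to `e`.
Monomials of degree larger than `e` are left unchanged. -/
noncomputable def homogenizeAt (z : σ) (e : ℕ) : MvPolynomial σ R →ₗ[R] MvPolynomial σ R :=
  (basisMonomials σ R).constr R fun m => monomial (m + Finsupp.single z (e - m.degree)) 1

theorem homogenizeAt_monomial (z : σ) (e : ℕ) (m : σ →₀ ℕ) (c : R) :
    homogenizeAt z e (monomial m c) = monomial (m + Finsupp.single z (e - m.degree)) c := by
  have monomial_eq_smul_basis : monomial m c = c • basisMonomials σ R m := by
    simp [smul_monomial]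
  rw [monomial_eq_smul_basis, map_smul, homogenizeAt, Module.Basis.constr_basis, smul_monomial,
    smul_eq_mul, mul_one]

theorem homogenizeAt_of_isHomogeneous (z : σ) {e : ℕ} {f : MvPolynomial σ R}
    (hf : f.IsHomogeneous e) : homogenizeAt z e f = f := by
  conv_lhs => rw [f.as_sum, map_sum]
  conv_rhs => rw [f.as_sum]
  refine Finset.sum_congr rfl fun m hm => ?_
  have degree_m : m.degree = e := (hf.degree_eq_sum_deg_support hm).symm
  rw [homogenizeAt_monomial, degree_m, Nat.sub_self, Finsupp.single_zero, add_zero]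

theorem homogenizeAt_mul_X_pow (z i : σ) (e a : ℕ) (f : MvPolynomial σ R) :
    homogenizeAt z (e + a) (f * X i ^ a) = homogenizeAt z e f * X i ^ a := by
  induction f using MvPolynomial.induction_on' with
  | monomial m c =>
    simp only [X_pow_eq_monomial, monomial_mul, homogenizeAt_monomial, map_add,
      Finsupp.degree_single, Nat.add_sub_add_right, add_right_comm]
  | add f g hf hg => rw [add_mul, map_add, hf, hg, map_add, add_mul]

theorem homogenizeAt_add_right (z : σ) {e : ℕ} (a : ℕ) {f : MvPolynomial σ R}
    (hf : f.totalDegree ≤ e) :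
    homogenizeAt z (e + a) f = homogenizeAt z e f * X z ^ a := by
  rw [f.as_sum, map_sum, map_sum, Finset.sum_mul]
  refine Finset.sum_congr rfl fun m hm => ?_
  have degree_m : m.degree ≤ e := (le_totalDegree hm).trans hf
  rw [homogenizeAt_monomial, homogenizeAt_monomial, X_pow_eq_monomial, monomial_mul, mul_one,
    add_assoc, ← Finsupp.single_add, Nat.sub_add_comm degree_m]

end Homogenization

theorem homogenizeAt_mul_X_pow_sub_one {R σ : Type*} [CommRing R] (z i : σ) {e : ℕ} (a : ℕ)
    {f : MvPolynomial σ R} (hf : f.totalDegree ≤ e) :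
    homogenizeAt z (e + a) (f * (X i ^ a - 1)) = homogenizeAt z e f * (X i ^ a - X z ^ a) := by
  rw [mul_sub_one, map_sub, homogenizeAt_mul_X_pow, homogenizeAt_add_right z a hf, mul_sub]

theorem totalDegree_X_pow_sub_one {R σ : Type*} [CommRing R] [Nontrivial R] (i : σ) (n : ℕ) :
    (X i ^ n - 1 : MvPolynomial σ R).totalDegree = n := by
  rcases n.eq_zero_or_pos with rfl | hn
  · simp
  · rw [sub_eq_add_neg, totalDegree_add_eq_left_of_totalDegree_lt, totalDegree_X_pow]
    rwa [totalDegree_neg, totalDegree_one, totalDegree_X_pow]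

section RootsOfUnity

variable {R σ : Type*} [CommRing R]

theorem prod_nthRootsFinset_X_sub_C [IsDomain R] {n : ℕ} [NeZero n] {ζ : R}
    (hζ : IsPrimitiveRoot ζ n) (i : σ) :
    ∏ r ∈ Polynomial.nthRootsFinset n (1 : R), (X i - C r : MvPolynomial σ R) = X i ^ n - 1 := by
  simpa [algebraMap_eq] using
    (congrArg (Polynomial.aeval (X i : MvPolynomial σ R))
      (Polynomial.X_pow_sub_one_eq_prod (NeZero.pos n) hζ)).symm

theorem exists_eq_sum_mul_X_pow_sub_one [IsDomain R] [Finite σ] {n : ℕ} [NeZero n] {ζ : R}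
    (hζ : IsPrimitiveRoot ζ n) {f : MvPolynomial σ R}
    (hf : ∀ x : σ → R, (∀ i, x i ^ n = 1) → eval x f = 0) :
    ∃ h : σ →₀ MvPolynomial σ R,
      (∀ i ∈ h.support, (h i).totalDegree + n ≤ f.totalDegree) ∧
        f = ∑ i ∈ h.support, h i * (X i ^ n - 1) := by
  have one_mem : (1 : R) ∈ Polynomial.nthRootsFinset n (1 : R) := by
    simp [Polynomial.mem_nthRootsFinset (NeZero.pos n)]
  obtain ⟨h, hdeg, hsum⟩ := combinatorial_nullstellensatz_exists_linearCombination
    (fun _ : σ => Polynomial.nthRootsFinset n (1 : R)) (fun _ => ⟨1, one_mem⟩) f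
    fun x hx => hf x fun i => (Polynomial.mem_nthRootsFinset (NeZero.pos n) 1).mp (hx i)
  simp only [prod_nthRootsFinset_X_sub_C hζ] at hdeg hsum
  refine ⟨h, fun i hi => ?_, hsum⟩
  have X_pow_sub_one_ne_zero : (X i ^ n - 1 : MvPolynomial σ R) ≠ 0 := fun h0 =>
    NeZero.ne n (by rw [← totalDegree_X_pow_sub_one (R := R) i n, h0, totalDegree_zero])
  have := hdeg i
  rwa [totalDegree_mul_of_isDomain X_pow_sub_one_ne_zero (Finsupp.mem_support_iff.mp hi),
    totalDegree_X_pow_sub_one, add_comm] at this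

variable (R) in
/-- The ideal `(X i ^ n - X z ^ n : i ≠ z)`. For `n = q - 1` over the field with `q` elements it is
the vanishing ideal of the projective torus, with `X z` in the role of `t_1`. -/
noncomputable def powSubPowIdeal (z : σ) (n : ℕ) : Ideal (MvPolynomial σ R) :=
  Ideal.span {g | ∃ i, i ≠ z ∧ g = X i ^ n - X z ^ n}

theorem X_pow_sub_X_pow_mem_powSubPowIdeal (z i : σ) (n : ℕ) :
    X i ^ n - X z ^ n ∈ powSubPowIdeal R z n := by
  rcases eq_or_ne i z with rfl | hi
  · rw [sub_self]
    exact zero_mem _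
  · exact Ideal.subset_span ⟨i, hi, rfl⟩

theorem eval_eq_zero_of_mem_powSubPowIdeal {z : σ} {n : ℕ} {f : MvPolynomial σ R}
    (hf : f ∈ powSubPowIdeal R z n) {x : σ → R} (hx : ∀ i, x i ^ n = 1) : eval x f = 0 := by
  suffices powSubPowIdeal R z n ≤ RingHom.ker (eval x) from this hf
  refine Ideal.span_le.mpr ?_
  rintro _ ⟨i, -, rfl⟩
  simp [RingHom.mem_ker, hx]

theorem mem_powSubPowIdeal_of_eval_eq_zero [IsDomain R] [Finite σ] {n : ℕ} [NeZero n] {ζ : R}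
    (hζ : IsPrimitiveRoot ζ n) (z : σ) {e : ℕ} {f : MvPolynomial σ R} (hf : f.IsHomogeneous e)
    (hvanish : ∀ x : σ → R, (∀ i, x i ^ n = 1) → eval x f = 0) :
    f ∈ powSubPowIdeal R z n := by
  obtain ⟨h, hdeg, hsum⟩ := exists_eq_sum_mul_X_pow_sub_one hζ hvanish
  rw [← homogenizeAt_of_isHomogeneous z hf, hsum, map_sum]
  refine Ideal.sum_mem _ fun i hi => ?_
  obtain ⟨d, rfl⟩ : ∃ d, e = d + n :=
    Nat.exists_eq_add_of_le' ((Nat.le_add_left _ _).trans ((hdeg i hi).trans hf.totalDegree_le))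
  have totalDegree_le : (h i).totalDegree ≤ d :=
    Nat.le_of_add_le_add_right ((hdeg i hi).trans hf.totalDegree_le)
  rw [homogenizeAt_mul_X_pow_sub_one z i n totalDegree_le]
  exact Ideal.mul_mem_left _ _ (X_pow_sub_X_pow_mem_powSubPowIdeal z i n)

end RootsOfUnity

theorem span_setOf_isHomogeneous_and_eq {R σ : Type*} [CommSemiring R]
    {G : Set (MvPolynomial σ R)} {P : MvPolynomial σ R → Prop}
    (hG : ∀ g ∈ G, ∃ e, g.IsHomogeneous e)
    (hP : ∀ e f, f.IsHomogeneous e → (P f ↔ f ∈ Ideal.span G)) :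
    Ideal.span {f | (∃ e, f.IsHomogeneous e) ∧ P f} = Ideal.span G := by
  refine le_antisymm (Ideal.span_le.mpr ?_) (Ideal.span_mono fun g hg => ?_)
  · rintro f ⟨⟨e, hf⟩, hPf⟩
    exact (hP e f hf).mp hPf
  · obtain ⟨e, he⟩ := hG g hg
    exact ⟨⟨e, he⟩, (hP e g he).mpr (Ideal.subset_span hg)⟩

theorem exists_isPrimitiveRoot_card_sub_one (K : Type*) [Field K] [Fintype K] :
    ∃ ζ : K, IsPrimitiveRoot ζ (Fintype.card K - 1) := by
  obtain ⟨u, hu⟩ := IsCyclic.exists_ofOrder_eq_natCard (α := Kˣ)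
  refine ⟨u, IsPrimitiveRoot.coe_units_iff.mpr ?_⟩
  rw [← Nat.card_eq_fintype_card, ← Nat.card_units, ← hu]
  exact IsPrimitiveRoot.orderOf u

theorem pow_card_sub_one_eq_one_iff_ne_zero {K : Type*} [Field K] [Fintype K] {a : K} :
    a ^ (Fintype.card K - 1) = 1 ↔ a ≠ 0 := by
  refine ⟨?_, FiniteField.pow_card_sub_one_eq_one a⟩
  rintro ha rfl
  rw [zero_pow (Nat.sub_ne_zero_of_lt Fintype.one_lt_card)] at ha
  exact zero_ne_one ha

theorem stmt_7_general {R σ : Type*} [CommRing R] [IsDomain R] [Finite σ] {n : ℕ} [NeZero n]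
    {ζ : R} (hζ : IsPrimitiveRoot ζ n) (z : σ) :
    (∀ (e : ℕ) (f : MvPolynomial σ R), f.IsHomogeneous e →
      ((∀ x : σ → R, (∀ i, x i ^ n = 1) → eval x f = 0) ↔ f ∈ powSubPowIdeal R z n)) ∧
    Ideal.span {f : MvPolynomial σ R |
        (∃ e, f.IsHomogeneous e) ∧ ∀ x : σ → R, (∀ i, x i ^ n = 1) → eval x f = 0} =
      powSubPowIdeal R z n := by
  have vanishes_iff_mem : ∀ (e : ℕ) (f : MvPolynomial σ R), f.IsHomogeneous e →
      ((∀ x : σ → R, (∀ i, x i ^ n = 1) → eval x f = 0) ↔ f ∈ powSubPowIdeal R z n) :=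
    fun e f hf => ⟨mem_powSubPowIdeal_of_eval_eq_zero hζ z hf,
      fun hmem x hx => eval_eq_zero_of_mem_powSubPowIdeal hmem hx⟩
  refine ⟨vanishes_iff_mem, span_setOf_isHomogeneous_and_eq ?_ vanishes_iff_mem⟩
  rintro _ ⟨i, -, rfl⟩
  exact ⟨n, (isHomogeneous_X_pow i n).sub (isHomogeneous_X_pow z n)⟩

/-- A homogeneous polynomial `f ∈ K[t_1,…,t_s]` vanishes at every point of the affine
torus `(K*)^s` if and only if it belongs to the ideal generated by
`t_i^(q-1) - t_1^(q-1)` for `i = 2,…,s`; consequently the vanishing ideal of the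
projective torus (the ideal generated by the homogeneous polynomials vanishing on the
torus) equals that ideal. -/
theorem stmt_7 (K : Type) [Field K] [Fintype K] (q s : ℕ)
    (hK : Fintype.card K = q) (hs : 2 ≤ s) :
    (∀ (e : ℕ) (f : MvPolynomial (Fin s) K), f.IsHomogeneous e →
      ((∀ x : Fin s → K, (∀ i, x i ≠ 0) → eval x f = 0) ↔
        f ∈ Ideal.span {g : MvPolynomial (Fin s) K |
          ∃ i : Fin s, i ≠ (⟨0, by omega⟩ : Fin s) ∧
            g = X i ^ (q - 1) - X (⟨0, by omega⟩ : Fin s) ^ (q - 1)})) ∧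
    Ideal.span {f : MvPolynomial (Fin s) K |
        (∃ e, f.IsHomogeneous e) ∧
        ∀ x : Fin s → K, (∀ i, x i ≠ 0) → eval x f = 0} =
      Ideal.span {g : MvPolynomial (Fin s) K |
        ∃ i : Fin s, i ≠ (⟨0, by omega⟩ : Fin s) ∧
          g = X i ^ (q - 1) - X (⟨0, by omega⟩ : Fin s) ^ (q - 1)} := by
  subst hK
  have : NeZero (Fintype.card K - 1) := ⟨Nat.sub_ne_zero_of_lt Fintype.one_lt_card⟩
  obtain ⟨ζ, hζ⟩ := exists_isPrimitiveRoot_card_sub_one K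
  simpa only [pow_card_sub_one_eq_one_iff_ne_zero, powSubPowIdeal] using
    stmt_7_general hζ (⟨0, by omega⟩ : Fin s)
end

section
/- Let K be a finite field with q elements, q ≥ 3, and let T be the projective torus in ℙ^1 over K. Then for d ≥ 1 the minimum distance of C_T(d) is δ_d = q−1−d if 1 ≤ d ≤ q−3 and δ_d = 1 if d ≥ q−2; moreover C_T(d) is a maximum distance separable code, i.e., δ_d = |T| − dim_K C_T(d) + 1. -/
open MvPolynomial

/-- The Hilbert function of a set `Y` of points of projective space (equivalently the
dimension of the parameterized code of order `d` on `Y`): the `K`-dimension of the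
space of functions on `Y` of the form `[P] ↦ F(P)/P_{i0}^d` with `F` homogeneous of
degree `d`. -/
noncomputable def hilbFn (K : Type) [Field K] {ι : Type}
    (Y : Set (Projectivization K (ι → K))) (i0 : ι) (d : ℕ) : ℕ :=
  Module.finrank K ↥(Submodule.span K
    {f : ↥Y → K | ∃ F : MvPolynomial ι K, F.IsHomogeneous d ∧
      ∀ p : ↥Y, f p = eval p.1.rep F / (p.1.rep i0) ^ d})

/-!
On the affine chart `x₀ ≠ 0` of `ℙ¹` a form of degree `d` is `x₀ ^ d * f (x₁ / x₀)` for a univariate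
polynomial `f` of degree at most `d`. Hence the code of a finite set `Y` in this chart is the
Reed–Solomon code with nodes the affine coordinates of the points of `Y`. A nonzero `f` of degree
at most `d` has at most `d` roots, a product of distinct linear factors attains this bound, and
Lagrange interpolation gives the dimension. The torus in `ℙ¹` corresponds to the nodes `K ∖ {0}`.
-/

section ReedSolomon

variable {K ι : Type*} [Field K]

/-- The Reed–Solomon code with nodes `v`: the vectors of values at the nodes of the polynomials of
degree less than `n`. The nodes may be repeated and `n` may exceed their number, so the dimension
is `n` only under further assumptions. -/
noncomputable def reedSolomonCode (v : ι → K) (n : ℕ) : Submodule K (ι → K) :=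
  (Polynomial.degreeLT K n).map (LinearMap.pi fun i => Polynomial.leval (v i))

lemma mem_reedSolomonCode {v : ι → K} {n : ℕ} {c : ι → K} :
    c ∈ reedSolomonCode v n ↔ ∃ f : Polynomial K, f.degree < n ∧ ∀ i, f.eval (v i) = c i := by
  simp [reedSolomonCode, Polynomial.mem_degreeLT, funext_iff]

lemma mem_reedSolomonCode_succ {v : ι → K} {d : ℕ} {c : ι → K} :
    c ∈ reedSolomonCode v (d + 1) ↔
      ∃ f : Polynomial K, f.natDegree ≤ d ∧ ∀ i, f.eval (v i) = c i := by
  simp [reedSolomonCode, Polynomial.degreeLT_succ_eq_degreeLE, Polynomial.mem_degreeLE,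
    Polynomial.natDegree_le_iff_degree_le, funext_iff]

lemma reedSolomonCode_mono (v : ι → K) : Monotone (reedSolomonCode v) :=
  fun _ _ hmn => Submodule.map_mono (Polynomial.degreeLT_mono hmn)

variable [Fintype ι] {v : ι → K} {n : ℕ}

lemma finrank_reedSolomonCode_of_le_card (hv : v.Injective) (hn : n ≤ Fintype.card ι) :
    Module.finrank K (reedSolomonCode v n) = n := by
  have eval_injective : Function.Injective
      ((LinearMap.pi fun i => Polynomial.leval (v i)).domRestrict (Polynomial.degreeLT K n)) := by
    rw [injective_iff_map_eq_zero]
    rintro ⟨f, hf⟩ eval_eq_zero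
    have degree_lt : f.degree < (Finset.univ : Finset ι).card :=
      (Polynomial.mem_degreeLT.mp hf).trans_le (by exact_mod_cast hn)
    exact Subtype.ext <| Polynomial.eq_zero_of_degree_lt_of_eval_index_eq_zero _ hv.injOn degree_lt
      fun i _ => congrFun eval_eq_zero i
  rw [reedSolomonCode, ← LinearMap.range_domRestrict, LinearMap.finrank_range_of_inj eval_injective,
    (Polynomial.degreeLTEquiv K n).finrank_eq, Module.finrank_fin_fun]

lemma reedSolomonCode_eq_top_of_card_le (hv : v.Injective) (hn : Fintype.card ι ≤ n) :
    reedSolomonCode v n = ⊤ := by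
  classical
  refine eq_top_iff.mpr fun c _ => mem_reedSolomonCode.mpr
    ⟨Lagrange.interpolate Finset.univ v c, ?_, fun i => ?_⟩
  · exact (Lagrange.degree_interpolate_lt c hv.injOn).trans_le (by exact_mod_cast hn)
  · exact Lagrange.eval_interpolate_at_node c hv.injOn (Finset.mem_univ i)

lemma finrank_reedSolomonCode (hv : v.Injective) :
    Module.finrank K (reedSolomonCode v n) = min n (Fintype.card ι) := by
  rcases le_total n (Fintype.card ι) with hn | hn
  · rw [finrank_reedSolomonCode_of_le_card hv hn, min_eq_left hn]
  · rw [reedSolomonCode_eq_top_of_card_le hv hn, finrank_top,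
      Module.finrank_fintype_fun_eq_card, min_eq_right hn]

variable [DecidableEq K]

lemma card_lt_hammingNorm_add_of_mem_reedSolomonCode (hv : v.Injective) {c : ι → K}
    (hc : c ∈ reedSolomonCode v n) (hc0 : c ≠ 0) : Fintype.card ι < hammingNorm c + n := by
  obtain ⟨f, hf, eval_eq⟩ := mem_reedSolomonCode.mp hc
  by_contra! hle
  have card_zeros : n ≤ (Finset.univ.filter fun i => c i = 0).card := by
    have card_zeros_add : (Finset.univ.filter fun i => c i = 0).card + hammingNorm c =
        Fintype.card ι := Finset.card_filter_add_card_filter_not fun i => c i = 0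
    omega
  have f_eq_zero : f = 0 :=
    Polynomial.eq_zero_of_degree_lt_of_eval_index_eq_zero _ hv.injOn
      (hf.trans_le (by exact_mod_cast card_zeros))
      fun i hi => (eval_eq i).trans (Finset.mem_filter.mp hi).2
  exact hc0 (funext fun i => by simp [← eval_eq i, f_eq_zero])

lemma exists_mem_reedSolomonCode_hammingNorm_add_eq (hv : v.Injective) (hn0 : 0 < n)
    (hn : n ≤ Fintype.card ι) :
    ∃ c ∈ reedSolomonCode v n, hammingNorm c + n = Fintype.card ι + 1 := by
  classical
  obtain ⟨S, -, hS⟩ := Finset.exists_subset_card_eq (s := (Finset.univ : Finset ι)) (n := n - 1)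
    (by rw [Finset.card_univ]; omega)
  refine ⟨fun i => (Lagrange.nodal S v).eval (v i),
    mem_reedSolomonCode.mpr ⟨Lagrange.nodal S v, ?_, fun _ => rfl⟩, ?_⟩
  · rw [Lagrange.degree_nodal]
    exact_mod_cast (by omega : S.card < n)
  · have support_eq : (Finset.univ.filter fun i => (Lagrange.nodal S v).eval (v i) ≠ 0) = Sᶜ := by
      ext i
      simp [Lagrange.eval_nodal, Finset.prod_eq_zero_iff, sub_eq_zero, hv.eq_iff]
    rw [hammingNorm, support_eq, Finset.card_compl]
    omega

theorem isLeast_hammingNorm_reedSolomonCode [Nonempty ι] (hv : v.Injective) (hn : 0 < n) :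
    IsLeast (hammingNorm '' {c | c ∈ reedSolomonCode v n ∧ c ≠ 0})
      (Fintype.card ι - Module.finrank K (reedSolomonCode v n) + 1) := by
  have card_pos : 0 < Fintype.card ι := Fintype.card_pos
  rw [finrank_reedSolomonCode hv]
  constructor
  · obtain ⟨c, hc, norm_eq⟩ := exists_mem_reedSolomonCode_hammingNorm_add_eq hv
      (lt_min hn card_pos) (min_le_right n _)
    refine ⟨c, ⟨reedSolomonCode_mono v (min_le_left n _) hc, ?_⟩, by omega⟩
    exact hammingNorm_pos_iff.mp (by omega)
  · rintro _ ⟨c, ⟨hc, hc0⟩, rfl⟩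
    have := card_lt_hammingNorm_add_of_mem_reedSolomonCode hv hc hc0
    have := hammingNorm_pos_iff.mpr hc0
    omega

end ReedSolomon

section ParameterizedCode

variable {K ι : Type} [Field K] {Y : Set (Projectivization K (ι → K))} {i₀ : ι} {d : ℕ}

variable (Y i₀ d) in
/-- The parameterized code `C_Y(d)`: the functions `[P] ↦ F(P) / P_{i₀} ^ d` on `Y` with `F`
homogeneous of degree `d`, where `P` is the chosen representative. Points with `P_{i₀} = 0` get the
junk value `0` when `d` is positive. -/
noncomputable def parameterizedCode : Submodule K (Y → K) :=
  (homogeneousSubmodule ι K d).map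
    (LinearMap.pi fun p : Y => (p.1.rep i₀ ^ d)⁻¹ • (aeval p.1.rep).toLinearMap)

lemma mem_parameterizedCode {c : Y → K} :
    c ∈ parameterizedCode Y i₀ d ↔ ∃ F : MvPolynomial ι K, F.IsHomogeneous d ∧
      ∀ p : Y, c p = eval p.1.rep F / p.1.rep i₀ ^ d := by
  simp [parameterizedCode, funext_iff, mem_homogeneousSubmodule, div_eq_inv_mul, eq_comm]

lemma hilbFn_eq_finrank_parameterizedCode :
    hilbFn K Y i₀ d = Module.finrank K (parameterizedCode Y i₀ d) := by
  have setOf_eq : {f : Y → K | ∃ F : MvPolynomial ι K, F.IsHomogeneous d ∧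
      ∀ p : Y, f p = eval p.1.rep F / p.1.rep i₀ ^ d} = parameterizedCode Y i₀ d :=
    Set.ext fun _ => mem_parameterizedCode.symm
  rw [hilbFn, setOf_eq, Submodule.span_eq]

lemma ncard_eval_ne_zero_eq_hammingNorm [Fintype Y] [DecidableEq K]
    (hY : ∀ p ∈ Y, p.rep i₀ ≠ 0) (F : MvPolynomial ι K) :
    {p ∈ Y | eval p.rep F ≠ 0}.ncard =
      hammingNorm fun p : Y => eval p.1.rep F / p.1.rep i₀ ^ d := by
  have image_eq : {p ∈ Y | eval p.rep F ≠ 0} = Subtype.val ''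
      {p : Y | eval p.1.rep F / p.1.rep i₀ ^ d ≠ 0} := by
    ext p
    simp +contextual [hY, and_comm]
  rw [image_eq, Set.ncard_image_of_injective _ Subtype.val_injective, hammingNorm,
    ← Set.ncard_coe_finset, Finset.coe_filter_univ]

lemma minDist_eq_sInf_hammingNorm [Fintype Y] [DecidableEq K] (hY : ∀ p ∈ Y, p.rep i₀ ≠ 0) :
    minDist K Y d = sInf (hammingNorm '' {c | c ∈ parameterizedCode Y i₀ d ∧ c ≠ 0}) := by
  have ne_zero_iff (F : MvPolynomial ι K) :
      (fun p : Y => eval p.1.rep F / p.1.rep i₀ ^ d) ≠ 0 ↔ ∃ p ∈ Y, eval p.rep F ≠ 0 := by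
    simp +contextual [Function.ne_iff, hY]
  rw [minDist]
  congr 1
  ext w
  constructor
  · rintro ⟨F, hF, hne, rfl⟩
    exact ⟨_, ⟨mem_parameterizedCode.mpr ⟨F, hF, fun _ => rfl⟩, (ne_zero_iff F).mpr hne⟩,
      (ncard_eval_ne_zero_eq_hammingNorm hY F).symm⟩
  · rintro ⟨c, ⟨hc, hc0⟩, rfl⟩
    obtain ⟨F, hF, eval_eq⟩ := mem_parameterizedCode.mp hc
    obtain rfl := funext eval_eq
    exact ⟨F, hF, (ne_zero_iff F).mp hc0, (ncard_eval_ne_zero_eq_hammingNorm hY F).symm⟩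

end ParameterizedCode

section BinaryForms

lemma exists_natDegree_le_homogenize_eq {R : Type*} [CommSemiring R] {d : ℕ}
    {F : MvPolynomial (Fin 2) R} (hF : F.IsHomogeneous d) :
    ∃ f : Polynomial R, f.natDegree ≤ d ∧ f.homogenize d = F := by
  refine ⟨aeval ![Polynomial.X, 1] F, ?_, Polynomial.homogenize_eq_of_isHomogeneous hF rfl⟩
  rw [← mul_one d]
  refine aeval_natDegree_le F hF.totalDegree_le _ fun i => ?_
  fin_cases i
  · exact Polynomial.natDegree_X_le
  · simp

-- `Polynomial.homogenize` dehomogenizes at `x₁ = 1`, whereas the chart used here is `x₀ ≠ 0`.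
lemma eval_rename_swap_homogenize {K : Type*} [Semifield K] {d : ℕ} {f : Polynomial K}
    (hf : f.natDegree ≤ d) {x : Fin 2 → K} (hx : x 0 ≠ 0) :
    eval x (rename (Equiv.swap 0 1) (f.homogenize d)) = f.eval (x 1 / x 0) * x 0 ^ d := by
  rw [eval_rename, Polynomial.eval_homogenize hf _ (by simpa using hx)]
  simp

end BinaryForms

section ProjectiveLine

variable {K : Type*} [Field K]

/-- The coordinate `x₁ / x₀` on the chart `x₀ ≠ 0` of `ℙ¹`; the point with `x₀ = 0` gets the junk
value `0`. -/
noncomputable def affineCoord (p : Projectivization K (Fin 2 → K)) : K :=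
  p.rep 1 / p.rep 0

lemma affineCoord_mk {x : Fin 2 → K} (hx : x ≠ 0) :
    affineCoord (Projectivization.mk K x hx) = x 1 / x 0 := by
  obtain ⟨a, ha⟩ := Projectivization.exists_smul_eq_mk_rep K x hx
  simp [affineCoord, ← ha, Units.smul_def, mul_div_mul_left]

lemma injOn_affineCoord :
    Set.InjOn affineCoord {p : Projectivization K (Fin 2 → K) | p.rep 0 ≠ 0} := by
  intro p (hp : p.rep 0 ≠ 0) r (hr : r.rep 0 ≠ 0) (h : p.rep 1 / p.rep 0 = r.rep 1 / r.rep 0)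
  rw [← p.mk_rep, ← r.mk_rep, Projectivization.mk_eq_mk_iff']
  refine ⟨p.rep 0 / r.rep 0, funext fun i => ?_⟩
  fin_cases i
  · simp [hr]
  · simp [div_mul_eq_mul_div, mul_div_assoc, ← h, mul_div_cancel₀, hp]

end ProjectiveLine

section MinimumDistance

variable {K : Type} [Field K] {Y : Set (Projectivization K (Fin 2 → K))} {d : ℕ}

lemma parameterizedCode_eq_reedSolomonCode (hY : ∀ p ∈ Y, p.rep 0 ≠ 0) :
    parameterizedCode Y 0 d = reedSolomonCode (fun p : Y => affineCoord p.1) (d + 1) := by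
  have eval_div_eq {f : Polynomial K} (hf : f.natDegree ≤ d) (p : Y) :
      eval p.1.rep (rename (Equiv.swap 0 1) (f.homogenize d)) / p.1.rep 0 ^ d =
        f.eval (affineCoord p.1) := by
    have hp : p.1.rep 0 ≠ 0 := hY p p.2
    rw [eval_rename_swap_homogenize hf hp, mul_div_cancel_right₀ _ (pow_ne_zero d hp), affineCoord]
  ext c
  rw [mem_parameterizedCode, mem_reedSolomonCode_succ]
  constructor
  · rintro ⟨F, hF, eval_eq⟩
    obtain ⟨f, hf, f_eq⟩ := exists_natDegree_le_homogenize_eq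
      (hF.rename_isHomogeneous (f := Equiv.swap (0 : Fin 2) 1))
    have swap_homogenize_eq : rename (Equiv.swap 0 1) (f.homogenize d) = F := by
      rw [f_eq, rename_rename, ← Equiv.coe_trans, Equiv.swap_swap, Equiv.coe_refl, rename_id_apply]
    exact ⟨f, hf, fun p => by rw [eval_eq, ← eval_div_eq hf, swap_homogenize_eq]⟩
  · rintro ⟨f, hf, eval_eq⟩
    exact ⟨rename (Equiv.swap 0 1) (f.homogenize d),
      (Polynomial.isHomogeneous_homogenize f).rename_isHomogeneous,
      fun p => (eval_eq p).symm.trans (eval_div_eq hf p).symm⟩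

lemma injective_affineCoord_of_rep_zero_ne (hY : ∀ p ∈ Y, p.rep 0 ≠ 0) :
    Function.Injective fun p : Y => affineCoord p.1 :=
  (injOn_affineCoord.mono hY).injective

lemma hilbFn_eq_min (hfin : Y.Finite) (hY : ∀ p ∈ Y, p.rep 0 ≠ 0) :
    hilbFn K Y 0 d = min (d + 1) Y.ncard := by
  have := hfin.fintype
  rw [hilbFn_eq_finrank_parameterizedCode, parameterizedCode_eq_reedSolomonCode hY,
    finrank_reedSolomonCode (injective_affineCoord_of_rep_zero_ne hY),
    ← Nat.card_eq_fintype_card, Nat.card_coe_set_eq]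

lemma minDist_eq_ncard_sub_hilbFn_add_one (hfin : Y.Finite) (hne : Y.Nonempty)
    (hY : ∀ p ∈ Y, p.rep 0 ≠ 0) : minDist K Y d = Y.ncard - hilbFn K Y 0 d + 1 := by
  classical
  have := hfin.fintype
  have := hne.to_subtype
  rw [minDist_eq_sInf_hammingNorm hY, hilbFn_eq_finrank_parameterizedCode,
    parameterizedCode_eq_reedSolomonCode hY, ← Nat.card_coe_set_eq, Nat.card_eq_fintype_card]
  exact (isLeast_hammingNorm_reedSolomonCode
    (injective_affineCoord_of_rep_zero_ne hY) d.succ_pos).csInf_eq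

end MinimumDistance

section ProjectiveTorus

variable {K : Type} [Field K]

lemma mk_mem_projTorus_iff {s : ℕ} {x : Fin s → K} (hx : x ≠ 0) :
    Projectivization.mk K x hx ∈ projTorus K s ↔ ∀ i, x i ≠ 0 := by
  obtain ⟨a, ha⟩ := Projectivization.exists_smul_eq_mk_rep K x hx
  simp [projTorus, ← ha, Units.smul_def]

lemma projTorus_nonempty {s : ℕ} [NeZero s] : (projTorus K s).Nonempty :=
  ⟨_, (mk_mem_projTorus_iff (one_ne_zero (α := Fin s → K))).mpr fun _ => one_ne_zero⟩

lemma affineCoord_image_projTorus : affineCoord '' projTorus K 2 = {0}ᶜ := by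
  apply Set.Subset.antisymm
  · rintro _ ⟨p, hp, rfl⟩
    exact div_ne_zero (hp 1) (hp 0)
  · intro x (hx : x ≠ 0)
    have one_x_ne_zero : ![1, x] ≠ 0 := fun h => one_ne_zero (congrFun h 0)
    refine ⟨Projectivization.mk K ![1, x] one_x_ne_zero, ?_, by simp [affineCoord_mk]⟩
    exact (mk_mem_projTorus_iff _).mpr (by simp [Fin.forall_fin_two, hx])

lemma ncard_projTorus_two [Finite K] : (projTorus K 2).ncard = Nat.card K - 1 := by
  have injOn : Set.InjOn affineCoord (projTorus K 2) := injOn_affineCoord.mono fun _ hp => hp 0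
  rw [← injOn.ncard_image, affineCoord_image_projTorus, Set.ncard_compl, Set.ncard_singleton]

end ProjectiveTorus

theorem stmt_10_general {K : Type} [Field K] {Y : Set (Projectivization K (Fin 2 → K))}
    (hfin : Y.Finite) (hne : Y.Nonempty) (hY : ∀ p ∈ Y, p.rep 0 ≠ 0) (d : ℕ) :
    (d < Y.ncard → minDist K Y d = Y.ncard - d) ∧
    (Y.ncard ≤ d + 1 → minDist K Y d = 1) ∧
    minDist K Y d = Y.ncard - hilbFn K Y 0 d + 1 := by
  have mds := minDist_eq_ncard_sub_hilbFn_add_one (d := d) hfin hne hY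
  have dim := hilbFn_eq_min (d := d) hfin hY
  omega

/-- For the projective torus `T ⊆ ℙ^1` over a finite field with `q ≥ 3` elements, the
minimum distance of `C_T(d)` is `q-1-d` for `1 ≤ d ≤ q-3` and `1` for `d ≥ q-2`;
moreover `C_T(d)` is MDS: `δ_d = |T| - dim C_T(d) + 1`. -/
theorem stmt_10 (K : Type) [Field K] [Fintype K] (q d : ℕ)
    (hK : Fintype.card K = q) (hq : 3 ≤ q) (hd : 1 ≤ d) :
    (d ≤ q - 3 → minDist K (projTorus K 2) d = q - 1 - d) ∧
    (q - 2 ≤ d → minDist K (projTorus K 2) d = 1) ∧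
    minDist K (projTorus K 2) d =
      Set.ncard (projTorus K 2) - hilbFn K (projTorus K 2) (0 : Fin 2) d + 1 := by
  obtain ⟨small, large, mds⟩ := stmt_10_general (Set.toFinite (projTorus K 2)) projTorus_nonempty
    (fun _ hp => hp 0) d
  rw [ncard_projTorus_two, Nat.card_eq_fintype_card, hK] at small large
  exact ⟨fun h => small (by omega), fun h => large (by omega), mds⟩
end
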